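/- Let α ∈ (2,3), σ > 0, n ≥ 2, and let γ ∈ H^{(α+1)/2+σ,2}(ℝ/ℤ,ℝⁿ) be injective and parametrized by arc-length. Then for every σ̂ with 0 < σ̂ < σ there exists a constant C < ∞ such that |R(γ,h)| ≤ C·‖h‖_{H^{3/2−σ̂,2}} for all h ∈ H^{(α+1)/2,2}(ℝ/ℤ,ℝⁿ); i.e. h ↦ R(γ,h) extends to a bounded linear functional on H^{3/2−σ̂,2}(ℝ/ℤ,ℝⁿ). -/

import Mathlib

open MeasureTheory Filter Set
open scoped RealInnerProductSpace ENNReal Topology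

noncomputable section

/-- `ℝⁿ` -/
abbrev Rn (n : ℕ) := EuclideanSpace ℝ (Fin n)

variable {n : ℕ}

/-- A 1-periodic curve is injective as a map on `ℝ/ℤ`. -/
def PerInjective (γ : ℝ → Rn n) : Prop :=
  ∀ u v : ℝ, γ u = γ v → ∃ k : ℤ, v = u + k

/-- `γ` is a regular curve: `γ'(u) ≠ 0` for all `u`. -/
def RegularCurve (γ : ℝ → Rn n) : Prop := ∀ u : ℝ, deriv γ u ≠ 0

/-- `γ` is parametrized by arc-length: `|γ'(u)| = 1` for all `u`. -/
def ArcLengthParam (γ : ℝ → Rn n) : Prop := ∀ u : ℝ, ‖deriv γ u‖ = 1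

/-- The length `L(γ) = ∫₀¹ |γ'(θ)| dθ` of the closed curve `γ`. -/
def curveLen (γ : ℝ → Rn n) : ℝ := ∫ θ in (0:ℝ)..1, ‖deriv γ θ‖

/-- The arc length `L(γ|_{[u,u+w]}) = |∫_u^{u+w} |γ'(θ)| dθ|`. -/
def arcLen (γ : ℝ → Rn n) (u w : ℝ) : ℝ := |∫ θ in u..(u + w), ‖deriv γ θ‖|

/-- The intrinsic distance `d_γ(u+w,u)`. -/
def idist (γ : ℝ → Rn n) (u w : ℝ) : ℝ :=
  min (arcLen γ u w) (curveLen γ - arcLen γ u w)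

/-- The integrand of the O'Hara energy `E^α`. -/
def ohIntegrand (α : ℝ) (γ : ℝ → Rn n) (u w : ℝ) : ℝ :=
  (1 / ‖γ (u + w) - γ u‖ ^ α - 1 / idist γ u w ^ α) * ‖deriv γ (u + w)‖ * ‖deriv γ u‖

/-- The O'Hara energy `E^α`, with values in `[0,∞]`. -/
def oharaE (α : ℝ) (γ : ℝ → Rn n) : ℝ≥0∞ :=
  ∫⁻ u in Ioc (0:ℝ) 1, ∫⁻ w in Ioo (-(1:ℝ)/2) (1/2), ENNReal.ofReal (ohIntegrand α γ u w)

/-- The O'Hara energy `E^α` as a real number. -/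
def oharaER (α : ℝ) (γ : ℝ → Rn n) : ℝ := (oharaE α γ).toReal

/-- `[−1/2,−ε] ∪ [ε,1/2]`, the `w`-section of `U_ε`. -/
def Wset (ε : ℝ) : Set ℝ := Icc (-(1:ℝ)/2) (-ε) ∪ Icc ε (1/2)

/-- The truncated O'Hara energy `E^α_ε`, an integral over `U_ε`. -/
def oharaEeps (α ε : ℝ) (γ : ℝ → Rn n) : ℝ :=
  ∫ u in Ioc (0:ℝ) 1, ∫ w in Wset ε, ohIntegrand α γ u w

/-- `F` has directional (Gâteaux) derivative `d` at `γ` in direction `h`. -/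
def HasDirDeriv (F : (ℝ → Rn n) → ℝ) (γ h : ℝ → Rn n) (d : ℝ) : Prop :=
  Tendsto (fun τ : ℝ => (F (γ + τ • h) - F γ) / τ) (𝓝[≠] (0:ℝ)) (𝓝 d)

/-- Squared Gagliardo seminorm `[f]²_{H^{s,2}}` of a 1-periodic map. -/
def gagliardoSq (s : ℝ) {E : Type*} [NormedAddCommGroup E] (f : ℝ → E) : ℝ≥0∞ :=
  ∫⁻ u in Ioc (0:ℝ) 1, ∫⁻ w in Ioo (-(1:ℝ)/2) (1/2),
    ENNReal.ofReal (‖f (u + w) - f u‖ ^ 2 / |w| ^ (1 + 2 * s))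

/-- Membership in the fractional Sobolev space `H^{1+σ,2}(ℝ/ℤ,ℝⁿ)`, `σ ∈ (0,1)`:
a 1-periodic `C¹` function whose derivative has finite Gagliardo seminorm of order `σ`. -/
def MemH1 (σ : ℝ) (γ : ℝ → Rn n) : Prop :=
  Function.Periodic γ 1 ∧ ContDiff ℝ 1 γ ∧ gagliardoSq σ (deriv γ) < ⊤

/-- The norm of `H^{1+σ,2}(ℝ/ℤ,ℝⁿ)`. -/
def H1Norm (σ : ℝ) (γ : ℝ → Rn n) : ℝ :=
  Real.sqrt (∫ u in Ioc (0:ℝ) 1, (‖γ u‖ ^ 2 + ‖deriv γ u‖ ^ 2)) +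
    Real.sqrt ((gagliardoSq σ (deriv γ)).toReal)

/-- Membership of a 1-periodic map in `L²(ℝ/ℤ)`. -/
def MemL2per {E : Type*} [NormedAddCommGroup E] (f : ℝ → E) : Prop :=
  Function.Periodic f 1 ∧ AEStronglyMeasurable f (volume : Measure ℝ) ∧
    IntegrableOn (fun u => ‖f u‖ ^ 2) (Ioc (0:ℝ) 1) volume

/-- Membership in the fractional Sobolev space `H^{s,2}(ℝ/ℤ)`, `s ∈ (0,1)`. -/
def MemHs0 (s : ℝ) {E : Type*} [NormedAddCommGroup E] (f : ℝ → E) : Prop :=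
  MemL2per f ∧ gagliardoSq s f < ⊤

/-- The norm of `H^{s,2}(ℝ/ℤ)` for `s ∈ (0,1)`: `‖f‖_{L²} + [f]_{H^{s,2}}`. -/
def Hs0Norm (s : ℝ) {E : Type*} [NormedAddCommGroup E] (f : ℝ → E) : ℝ :=
  Real.sqrt (∫ u in Ioc (0:ℝ) 1, ‖f u‖ ^ 2) + Real.sqrt ((gagliardoSq s f).toReal)

/-- The `k`-th Fourier coefficient (`j`-th component) of a 1-periodic curve. -/
def fCoef (γ : ℝ → Rn n) (k : ℤ) (j : Fin n) : ℂ :=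
  ∫ u in (0:ℝ)..1, (γ u j : ℂ) * Complex.exp ((-2) * (Real.pi : ℂ) * Complex.I * (k : ℂ) * (u : ℂ))

/-- Membership in `H^{s,2}(ℝ/ℤ,ℝⁿ)` via the Fourier characterization:
`((1+|k|²)^{s/2} γ̂(k))_k ∈ ℓ²`. -/
def MemHF (s : ℝ) (γ : ℝ → Rn n) : Prop :=
  Function.Periodic γ 1 ∧ Continuous γ ∧
    Summable (fun k : ℤ => (1 + (k : ℝ) ^ 2) ^ s * ∑ j, ‖fCoef γ k j‖ ^ 2)

/-- The squared Fourier norm of `H^{s,2}(ℝ/ℤ,ℝⁿ)`. -/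
def fNormSq (s : ℝ) (γ : ℝ → Rn n) : ℝ :=
  ∑' k : ℤ, (1 + (k : ℝ) ^ 2) ^ s * ∑ j, ‖fCoef γ k j‖ ^ 2

/-- C¹-norm of a 1-periodic map. -/
def c1Norm (f : ℝ → Rn n) : ℝ := ⨆ u : Icc (0:ℝ) 1, (‖f u.1‖ + ‖deriv f u.1‖)

/-- The integrand of `Q(γ,h)`. -/
def Qintegrand (α : ℝ) (γ h : ℝ → Rn n) (u w : ℝ) : ℝ :=
  ⟪deriv γ u, deriv h u⟫ / |w| ^ α
    - ⟪γ (u + w) - γ u, h (u + w) - h u⟫ / |w| ^ (α + 2)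

/-- The integrand of `R(γ,h)`. -/
def Rintegrand (α : ℝ) (γ h : ℝ → Rn n) (u w : ℝ) : ℝ :=
  2 * ⟪deriv γ u, deriv h u⟫ * (1 / ‖γ (u + w) - γ u‖ ^ α - 1 / |w| ^ α)
    - α * ⟪γ (u + w) - γ u, h (u + w) - h u⟫ *
        (1 / ‖γ (u + w) - γ u‖ ^ (α + 2) - 1 / |w| ^ (α + 2))

/-- `R(γ,h)`, an absolutely convergent double integral over `(ℝ/ℤ) × [−1/2,1/2]`. -/
def Rval (α : ℝ) (γ h : ℝ → Rn n) : ℝ :=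
  ∫ p in (Ioc (0:ℝ) 1) ×ˢ (Icc (-(1:ℝ)/2) (1/2)), Rintegrand α γ h p.1 p.2

/-!
On the slice of constant `w`, `|γ(u+w) - γ(u)|² = w² (1 - d_w(u))`, where `d_w` is one minus the
squared norm of the mean of `γ'` over `[u, u+w]`. Hence `|w|^α` times the integrand of `R` is a sum
of two products, of `⟨γ', h'⟩` and of the inner product of the segment means of `γ'` and `h'`, each
with a power series in `d_w` without constant term. The series converge uniformly in `w`, since
injectivity gives `sup d_w < 1`.

As `γ'` is a unit vector, the bias-variance identity makes `d_w` quadratic in the increments of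
`γ'`: bounding its Fourier coefficients by `|w|^{2τ}` costs `τ` derivatives on each of two factors
`γ'`. The powers of `d_w` are controlled in a weighted Wiener algebra by the sup norm alone, through
band-limited approximation, and weighted convolution estimates pair `d_w γ'` with `h'` in the
negative-order norm of order `1/2 - σ̂`. For `2τ = α - 1 + 2ε` the remaining factor
`|w|^{2τ - α} = |w|^{-1 + 2ε}` is integrable.
-/

/-! ### Weighted sequences on `ℤ` -/

/-- The weight `(1 + |k|) ^ c` on the frequencies `k ∈ ℤ`, valued in `[0, ∞]` so that weighted sums
need no summability side conditions. -/
def freqWeight (c : ℝ) (k : ℤ) : ℝ≥0∞ := (1 + ‖k‖ₑ) ^ c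

lemma freqWeight_add (c d : ℝ) (k : ℤ) : freqWeight (c + d) k = freqWeight c k * freqWeight d k :=
  ENNReal.rpow_add _ _ (by simp) (by finiteness)

@[simp] lemma freqWeight_zero (k : ℤ) : freqWeight 0 k = 1 := ENNReal.rpow_zero

@[simp] lemma freqWeight_apply_zero (c : ℝ) : freqWeight c 0 = 1 := by simp [freqWeight]

@[simp] lemma freqWeight_apply_neg (c : ℝ) (k : ℤ) : freqWeight c (-k) = freqWeight c k := by
  simp [freqWeight]

lemma freqWeight_mono {c d : ℝ} (h : c ≤ d) (k : ℤ) : freqWeight c k ≤ freqWeight d k :=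
  ENNReal.rpow_le_rpow_of_exponent_le (by simp) h

lemma one_le_freqWeight {c : ℝ} (h : 0 ≤ c) (k : ℤ) : 1 ≤ freqWeight c k := by
  simpa using freqWeight_mono h k

lemma freqWeight_mul_freqWeight_neg (c : ℝ) (k : ℤ) : freqWeight c k * freqWeight (-c) k = 1 := by
  rw [← freqWeight_add, add_neg_cancel, freqWeight_zero]

lemma freqWeight_sq (c : ℝ) (k : ℤ) : freqWeight c k ^ 2 = freqWeight (2 * c) k := by
  rw [two_mul, freqWeight_add, sq]

lemma freqWeight_add_le {c : ℝ} (h : 0 ≤ c) (i j : ℤ) :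
    freqWeight c (i + j) ≤ freqWeight c i * freqWeight c j := by
  simp only [freqWeight]
  rw [← ENNReal.mul_rpow_of_nonneg _ _ h]
  refine ENNReal.rpow_le_rpow ?_ h
  calc 1 + ‖i + j‖ₑ ≤ 1 + (‖i‖ₑ + ‖j‖ₑ) + ‖i‖ₑ * ‖j‖ₑ :=
        le_add_right (by gcongr; exact enorm_add_le i j)
    _ = (1 + ‖i‖ₑ) * (1 + ‖j‖ₑ) := by ring

lemma freqWeight_eq_ofReal (c : ℝ) (k : ℤ) :
    freqWeight c k = ENNReal.ofReal ((1 + |(k : ℝ)|) ^ c) := by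
  have hpos : 0 < 1 + |(k : ℝ)| := by positivity
  rw [freqWeight, ← ENNReal.ofReal_rpow_of_pos hpos, ENNReal.ofReal_add zero_le_one (abs_nonneg _),
    ENNReal.ofReal_one, ← Int.norm_eq_abs, ofReal_norm]

lemma tsum_freqWeight_neg_lt_top {c : ℝ} (hc : 1 < c) : ∑' k : ℤ, freqWeight (-c) k < ⊤ := by
  have hsummable : Summable fun k : ℤ => (1 + |(k : ℝ)|) ^ (-c) := by
    refine Summable.of_norm_bounded_eventually (Real.summable_abs_int_rpow hc) ?_
    filter_upwards [(finite_singleton (0 : ℤ)).compl_mem_cofinite] with k hk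
    have hk0 : 0 < |(k : ℝ)| := by simpa using hk
    rw [Real.norm_of_nonneg (by positivity)]
    exact Real.rpow_le_rpow_of_nonpos hk0 (by linarith) (by linarith)
  simp_rw [freqWeight_eq_ofReal]
  exact hsummable.tsum_ofReal_lt_top

lemma freqWeight_neg_mul_le_add {p q : ℝ} (hp : 0 ≤ p) (hq : 0 ≤ q) (i j : ℤ) :
    freqWeight (-p) i * freqWeight (-q) j ≤
      freqWeight (-(p + q)) i + freqWeight (-(p + q)) j := by
  have antitone {r : ℝ} (hr : 0 ≤ r) {i j : ℤ} (h : ‖i‖ₑ ≤ ‖j‖ₑ) :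
      freqWeight (-r) j ≤ freqWeight (-r) i := by
    simp only [freqWeight, ENNReal.rpow_neg]
    gcongr
  rw [neg_add, freqWeight_add, freqWeight_add]
  rcases le_total ‖i‖ₑ ‖j‖ₑ with h | h
  · exact le_add_right (by gcongr; exact antitone hq h)
  · exact le_add_left (by gcongr; exact antitone hp h)

/-- The weighted `ℓ²` norm `‖((1 + |k|) ^ c F k)_k‖` of a sequence of frequencies, with values in
`[0, ∞]`. -/
def weightedL2Norm (c : ℝ) (F : ℤ → ℝ≥0∞) : ℝ≥0∞ := (∑' k, (freqWeight c k * F k) ^ 2) ^ (1 / 2 : ℝ)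

lemma sq_rpow_half (x : ℝ≥0∞) : (x ^ (1 / 2 : ℝ)) ^ 2 = x := by
  rw [← ENNReal.rpow_two, ← ENNReal.rpow_mul]
  norm_num

lemma weightedL2Norm_sq (c : ℝ) (F : ℤ → ℝ≥0∞) :
    weightedL2Norm c F ^ 2 = ∑' k, (freqWeight c k * F k) ^ 2 :=
  sq_rpow_half _

lemma weightedL2Norm_mono_left {c d : ℝ} (h : c ≤ d) (F : ℤ → ℝ≥0∞) :
    weightedL2Norm c F ≤ weightedL2Norm d F := by
  refine ENNReal.rpow_le_rpow (ENNReal.tsum_le_tsum fun k => ?_) (by norm_num)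
  gcongr
  exact freqWeight_mono h k

lemma weightedL2Norm_freqWeight_mul (c d : ℝ) (F : ℤ → ℝ≥0∞) :
    weightedL2Norm c (fun k => freqWeight d k * F k) = weightedL2Norm (c + d) F := by
  simp_rw [weightedL2Norm, freqWeight_add, mul_assoc]

lemma tsum_mul_le_rpow_half {ι : Type*} (f g : ι → ℝ≥0∞) :
    ∑' i, f i * g i ≤ (∑' i, f i ^ 2) ^ (1 / 2 : ℝ) * (∑' i, g i ^ 2) ^ (1 / 2 : ℝ) := by
  rw [ENNReal.tsum_eq_iSup_sum]
  refine iSup_le fun s => ?_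
  refine (ENNReal.inner_le_Lp_mul_Lq s f g Real.HolderConjugate.two_two).trans ?_
  gcongr <;> simp_rw [ENNReal.rpow_two] <;> exact ENNReal.sum_le_tsum s

lemma tsum_mul_le_weightedL2Norm (c : ℝ) (F G : ℤ → ℝ≥0∞) :
    ∑' k, F k * G k ≤ weightedL2Norm (-c) F * weightedL2Norm c G := by
  have split (k : ℤ) : F k * G k = (freqWeight (-c) k * F k) * (freqWeight c k * G k) := by
    rw [mul_mul_mul_comm, mul_comm (freqWeight _ _), freqWeight_mul_freqWeight_neg, one_mul]
  simp_rw [split]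
  exact tsum_mul_le_rpow_half _ _

/-- The convolution `(F ⋆ G) k = ∑ⱼ F j G (k - j)` of sequences on `ℤ`. -/
def seqConv (F G : ℤ → ℝ≥0∞) (k : ℤ) : ℝ≥0∞ := ∑' j, F j * G (k - j)

lemma tsum_comp_sub_right (F : ℤ → ℝ≥0∞) (k : ℤ) : ∑' j, F (j - k) = ∑' j, F j :=
  (Equiv.subRight k).tsum_eq F

lemma tsum_comp_sub_left (F : ℤ → ℝ≥0∞) (k : ℤ) : ∑' j, F (k - j) = ∑' j, F j :=
  (Equiv.subLeft k).tsum_eq F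

lemma seqConv_mono_right {F G G' : ℤ → ℝ≥0∞} (h : ∀ k, G k ≤ G' k) (k : ℤ) :
    seqConv F G k ≤ seqConv F G' k :=
  ENNReal.tsum_le_tsum fun j => by gcongr; exact h _

lemma seqConv_const_mul_left (δ : ℝ≥0∞) (F G : ℤ → ℝ≥0∞) (k : ℤ) :
    seqConv (fun j => δ * F j) G k = δ * seqConv F G k := by
  simp_rw [seqConv, mul_assoc, ENNReal.tsum_mul_left]

lemma seqConv_const_mul (δ : ℝ≥0∞) (F : ℤ → ℝ≥0∞) (k : ℤ) :
    seqConv (fun j => δ * F j) (fun j => δ * F j) k = δ ^ 2 * seqConv F F k := by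
  simp_rw [seqConv, ← ENNReal.tsum_mul_left]
  exact tsum_congr fun j => by ring

lemma seqConv_assoc (F G H : ℤ → ℝ≥0∞) : seqConv (seqConv F G) H = seqConv F (seqConv G H) := by
  ext k
  calc seqConv (seqConv F G) H k = ∑' l, ∑' m, F m * (G (l - m) * H (k - l)) := by
        simp_rw [seqConv, ← ENNReal.tsum_mul_right, mul_assoc]
    _ = ∑' m, F m * ∑' l, G (l - m) * H (k - l) := by
        rw [ENNReal.tsum_comm]
        simp_rw [ENNReal.tsum_mul_left]
    _ = seqConv F (seqConv G H) k := by
        refine tsum_congr fun m => ?_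
        rw [seqConv, ← tsum_comp_sub_right (fun j => G j * H (k - m - j)) m]
        simp_rw [sub_sub_sub_cancel_right]

lemma tsum_freqWeight_mul_seqConv_le {c : ℝ} (hc : 0 ≤ c) (F G : ℤ → ℝ≥0∞) :
    ∑' k, freqWeight c k * seqConv F G k ≤
      (∑' k, freqWeight c k * F k) * ∑' k, freqWeight c k * G k := by
  calc ∑' k, freqWeight c k * seqConv F G k
      = ∑' k, ∑' j, freqWeight c k * (F j * G (k - j)) := by
        simp_rw [seqConv, ENNReal.tsum_mul_left]
    _ ≤ ∑' k, ∑' j, (freqWeight c j * F j) * (freqWeight c (k - j) * G (k - j)) := by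
        refine ENNReal.tsum_le_tsum fun k => ENNReal.tsum_le_tsum fun j => ?_
        rw [mul_mul_mul_comm]
        gcongr
        simpa only [add_sub_cancel] using freqWeight_add_le hc j (k - j)
    _ = ∑' j, ∑' k, (freqWeight c j * F j) * (freqWeight c (k - j) * G (k - j)) :=
        ENNReal.tsum_comm
    _ = (∑' k, freqWeight c k * F k) * ∑' k, freqWeight c k * G k := by
        simp_rw [ENNReal.tsum_mul_left,
          tsum_comp_sub_right (fun k => freqWeight c k * G k), ENNReal.tsum_mul_right]

lemma freqWeight_neg_mul_seqConv_le {c : ℝ} (hc : 0 ≤ c) (F G : ℤ → ℝ≥0∞) (k : ℤ) :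
    freqWeight (-c) k * seqConv F G k ≤
      seqConv (fun j => freqWeight c j * F j) (fun j => freqWeight (-c) j * G j) k := by
  rw [seqConv, ← ENNReal.tsum_mul_left]
  refine ENNReal.tsum_le_tsum fun j => ?_
  rw [mul_mul_mul_comm]
  gcongr
  calc freqWeight (-c) k
      = freqWeight (-c) k * (freqWeight c (k - j) * freqWeight (-c) (k - j)) := by
        rw [freqWeight_mul_freqWeight_neg, mul_one]
    _ ≤ freqWeight (-c) k * (freqWeight c k * freqWeight c j * freqWeight (-c) (k - j)) := by
        gcongr
        simpa only [freqWeight_apply_neg, ← sub_eq_add_neg] using freqWeight_add_le hc k (-j)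
    _ = (freqWeight c k * freqWeight (-c) k) * (freqWeight c j * freqWeight (-c) (k - j)) := by ring
    _ = freqWeight c j * freqWeight (-c) (k - j) := by
        rw [freqWeight_mul_freqWeight_neg, one_mul]

lemma seqConv_le_weightedL2Norm_mul (F G : ℤ → ℝ≥0∞) (k : ℤ) :
    seqConv F G k ≤ weightedL2Norm 0 F * weightedL2Norm 0 G := by
  refine (tsum_mul_le_weightedL2Norm 0 F (fun j => G (k - j))).trans_eq ?_
  simp [weightedL2Norm, tsum_comp_sub_left (fun j => G j ^ 2)]

/-- The constant in the bound `ℓ²_p ⋆ ℓ²_q ⊆ ℓ²`, where `r = p + q`; it is finite if `1 / 2 < r`. -/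
def seqConvConst (r : ℝ) : ℝ≥0∞ := (2 * ∑' k, freqWeight (-(2 * r)) k) ^ (1 / 2 : ℝ)

lemma seqConvConst_ne_top {r : ℝ} (hr : 1 / 2 < r) : seqConvConst r ≠ ⊤ :=
  ENNReal.rpow_ne_top_of_nonneg (by norm_num)
    (ENNReal.mul_ne_top ENNReal.ofNat_ne_top (tsum_freqWeight_neg_lt_top (by linarith)).ne)

lemma seqConv_sq_le {p q : ℝ} (hp : 0 ≤ p) (hq : 0 ≤ q) (F G : ℤ → ℝ≥0∞) (k : ℤ) :
    seqConv F G k ^ 2 ≤ seqConvConst (p + q) ^ 2 *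
      seqConv (fun j => (freqWeight p j * F j) ^ 2) (fun j => (freqWeight q j * G j) ^ 2) k := by
  have split (j : ℤ) : F j * G (k - j) = (freqWeight (-p) j * freqWeight (-q) (k - j)) *
      ((freqWeight p j * F j) * (freqWeight q (k - j) * G (k - j))) := by
    calc F j * G (k - j) = (freqWeight p j * freqWeight (-p) j) *
          (freqWeight q (k - j) * freqWeight (-q) (k - j)) * (F j * G (k - j)) := by
          simp only [freqWeight_mul_freqWeight_neg, one_mul]
      _ = _ := by ring
  have weights : ∑' j, (freqWeight (-p) j * freqWeight (-q) (k - j)) ^ 2 ≤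
      seqConvConst (p + q) ^ 2 := by
    calc ∑' j, (freqWeight (-p) j * freqWeight (-q) (k - j)) ^ 2
        ≤ ∑' j, (freqWeight (-(2 * (p + q))) j + freqWeight (-(2 * (p + q))) (k - j)) := by
          refine ENNReal.tsum_le_tsum fun j => ?_
          simpa only [mul_pow, freqWeight_sq, mul_neg, mul_add] using
            freqWeight_neg_mul_le_add (mul_nonneg zero_le_two hp) (mul_nonneg zero_le_two hq)
              j (k - j)
      _ = seqConvConst (p + q) ^ 2 := by
          rw [ENNReal.tsum_add, tsum_comp_sub_left, seqConvConst, sq_rpow_half, ← two_mul]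
  calc seqConv F G k ^ 2
      ≤ ((∑' j, (freqWeight (-p) j * freqWeight (-q) (k - j)) ^ 2) ^ (1 / 2 : ℝ) *
        (∑' j, ((freqWeight p j * F j) * (freqWeight q (k - j) * G (k - j))) ^ 2) ^
          (1 / 2 : ℝ)) ^ 2 := by
        simp_rw [seqConv, split]
        gcongr
        exact tsum_mul_le_rpow_half _ _
    _ = (∑' j, (freqWeight (-p) j * freqWeight (-q) (k - j)) ^ 2) *
        seqConv (fun j => (freqWeight p j * F j) ^ 2) (fun j => (freqWeight q j * G j) ^ 2) k := by
        simp only [seqConv, mul_pow, sq_rpow_half]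
    _ ≤ _ := by gcongr

lemma weightedL2Norm_seqConv_le {p q : ℝ} (hp : 0 ≤ p) (hq : 0 ≤ q) (F G : ℤ → ℝ≥0∞) :
    weightedL2Norm 0 (seqConv F G) ≤
      seqConvConst (p + q) * (weightedL2Norm p F * weightedL2Norm q G) := by
  rw [← ENNReal.pow_le_pow_left_iff two_ne_zero, mul_pow, mul_pow]
  simp only [weightedL2Norm_sq, freqWeight_zero, one_mul]
  refine (ENNReal.tsum_le_tsum fun k => seqConv_sq_le hp hq F G k).trans ?_
  rw [ENNReal.tsum_mul_left]
  gcongr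
  simpa only [freqWeight_zero, one_mul] using tsum_freqWeight_mul_seqConv_le le_rfl
    (fun j => (freqWeight p j * F j) ^ 2) (fun j => (freqWeight q j * G j) ^ 2)

/-- Trading weights of order `κ` allows `q` to be negative, down to `-κ`. -/
lemma freqWeight_neg_mul_seqConv_seqConv_le {κ b q : ℝ} (hκ : 0 ≤ κ) (hb : κ ≤ b)
    (hq : 0 ≤ q + κ) (A B H : ℤ → ℝ≥0∞) (k : ℤ) :
    freqWeight (-κ) k * seqConv A (seqConv B H) k ≤
      seqConvConst (b + q) * (weightedL2Norm κ A * weightedL2Norm b B * weightedL2Norm q H) := by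
  set B' : ℤ → ℝ≥0∞ := fun j => freqWeight κ j * B j with hB'
  set H' : ℤ → ℝ≥0∞ := fun j => freqWeight (-κ) j * H j with hH'
  calc freqWeight (-κ) k * seqConv A (seqConv B H) k
      ≤ seqConv (fun j => freqWeight κ j * A j) (seqConv B' H') k :=
        (freqWeight_neg_mul_seqConv_le hκ _ _ k).trans
          (seqConv_mono_right (freqWeight_neg_mul_seqConv_le hκ B H) k)
    _ ≤ weightedL2Norm κ A * weightedL2Norm 0 (seqConv B' H') := by
        refine (seqConv_le_weightedL2Norm_mul _ _ k).trans_eq ?_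
        rw [weightedL2Norm_freqWeight_mul, zero_add]
    _ ≤ weightedL2Norm κ A * (seqConvConst (b - κ + (q + κ)) *
          (weightedL2Norm (b - κ) B' * weightedL2Norm (q + κ) H')) := by
        gcongr
        exact weightedL2Norm_seqConv_le (sub_nonneg.2 hb) hq _ _
    _ = _ := by
        rw [hB', hH', weightedL2Norm_freqWeight_mul, weightedL2Norm_freqWeight_mul,
          sub_add_cancel, add_neg_cancel_right, show b - κ + (q + κ) = b + q by ring]
        ring

lemma weightedL2Norm_freqWeight_ne_top {a κ : ℝ} (h : κ + 1 / 2 < a) :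
    weightedL2Norm (-a) (freqWeight κ) ≠ ⊤ := by
  refine ENNReal.rpow_ne_top_of_nonneg (by norm_num) ?_
  simp_rw [← freqWeight_add, freqWeight_sq]
  rw [show 2 * (-a + κ) = -(2 * (a - κ)) by ring]
  exact (tsum_freqWeight_neg_lt_top (by linarith)).ne

lemma tsum_freqWeight_mul_ne_top {a κ : ℝ} {F : ℤ → ℝ≥0∞} (h : κ + 1 / 2 < a)
    (hF : weightedL2Norm a F ≠ ⊤) : ∑' k, freqWeight κ k * F k ≠ ⊤ :=
  ne_top_of_le_ne_top (ENNReal.mul_ne_top (weightedL2Norm_freqWeight_ne_top h) hF)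
    (tsum_mul_le_weightedL2Norm a _ F)

/-! ### The weighted Wiener algebra -/

section WienerAlgebra

variable {T : ℝ} [Fact (0 < T)]

lemma norm_fourierCoeff_le (f : C(AddCircle T, ℂ)) (k : ℤ) : ‖fourierCoeff f k‖ ≤ ‖f‖ := by
  refine (norm_integral_le_of_norm_le_const (C := ‖f‖) (ae_of_all _ fun t => ?_)).trans (by simp)
  calc ‖fourier (-k) t • f t‖ = ‖f t‖ := by rw [norm_smul, fourier_apply, Circle.norm_coe, one_mul]
    _ ≤ ‖f‖ := f.norm_coe_le_norm t

/-- The `k`-th Fourier coefficient of a continuous function as a continuous linear functional. -/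
def fourierCoeffCLM (k : ℤ) : C(AddCircle T, ℂ) →L[ℂ] ℂ :=
  LinearMap.mkContinuous
    { toFun := fun f => fourierCoeff f k
      map_add' := fun f g => by
        have integrable (f : C(AddCircle T, ℂ)) : Integrable f AddCircle.haarAddCircle :=
          f.continuous.integrable_of_hasCompactSupport (HasCompactSupport.of_compactSpace f)
        rw [ContinuousMap.coe_add, fourierCoeff.add (integrable f) (integrable g), Pi.add_apply]
      map_smul' := fun c f => by
        rw [ContinuousMap.coe_smul, fourierCoeff.const_smul, RingHom.id_apply] } 1
    fun f => (norm_fourierCoeff_le f k).trans_eq (one_mul _).symm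

@[simp] lemma fourierCoeffCLM_apply (k : ℤ) (f : C(AddCircle T, ℂ)) :
    fourierCoeffCLM k f = fourierCoeff f k := rfl

lemma fourierCoeff_fourier_mul (g : C(AddCircle T, ℂ)) (j k : ℤ) :
    fourierCoeff (fourier j * g : C(AddCircle T, ℂ)) k = fourierCoeff g (k - j) := by
  simp_rw [fourierCoeff, ContinuousMap.mul_apply, smul_eq_mul, ← mul_assoc, ← fourier_add]
  ring_nf

lemma hasSum_fourierCoeff_mul {f : C(AddCircle T, ℂ)} (hf : Summable (fourierCoeff f))
    (g : C(AddCircle T, ℂ)) (k : ℤ) :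
    HasSum (fun j => fourierCoeff f j * fourierCoeff g (k - j))
      (fourierCoeff (f * g : C(AddCircle T, ℂ)) k) := by
  have h := ((hasSum_fourier_series_of_summable hf).mul_right g).mapL (fourierCoeffCLM k)
  simpa only [smul_mul_assoc, map_smul, fourierCoeffCLM_apply, fourierCoeff_fourier_mul,
    smul_eq_mul] using h

lemma fourierCoeff_one (k : ℤ) :
    fourierCoeff (1 : C(AddCircle T, ℂ)) k = if k = 0 then 1 else 0 := by
  have h : ((1 : C(AddCircle T, ℂ)) : AddCircle T → ℂ) = fourier 0 := by ext t; simp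
  rw [h, fourierCoeff_fourier, Pi.single_apply]

/-- The sequence `F` is a majorant of the Fourier coefficients of `f`. -/
def FourierDominated (f : C(AddCircle T, ℂ)) (F : ℤ → ℝ≥0∞) : Prop :=
  ∀ k, ‖fourierCoeff f k‖ₑ ≤ F k

/-- The norm `∑ₖ (1 + |k|) ^ c |f̂ k|` of the weighted Wiener algebra, with values in `[0, ∞]`. -/
def wienerNorm (c : ℝ) (f : C(AddCircle T, ℂ)) : ℝ≥0∞ :=
  ∑' k, freqWeight c k * ‖fourierCoeff f k‖ₑ

namespace FourierDominated

variable {f g : C(AddCircle T, ℂ)} {F G : ℤ → ℝ≥0∞}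

lemma self (f : C(AddCircle T, ℂ)) : FourierDominated f fun k => ‖fourierCoeff f k‖ₑ :=
  fun _ => le_rfl

lemma mono (hf : FourierDominated f F) (h : ∀ k, F k ≤ G k) : FourierDominated f G :=
  fun k => (hf k).trans (h k)

lemma sub (hf : FourierDominated f F) (hg : FourierDominated g G) :
    FourierDominated (f - g) (fun k => F k + G k) := fun k => by
  rw [← fourierCoeffCLM_apply, map_sub]
  exact enorm_sub_le.trans (add_le_add (hf k) (hg k))

lemma sum {ι : Type*} (s : Finset ι) {f : ι → C(AddCircle T, ℂ)} {F : ι → ℤ → ℝ≥0∞}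
    (hf : ∀ i ∈ s, FourierDominated (f i) (F i)) :
    FourierDominated (∑ i ∈ s, f i) (fun k => ∑ i ∈ s, F i k) := fun k => by
  rw [← fourierCoeffCLM_apply, map_sum]
  exact (enorm_sum_le _ _).trans (Finset.sum_le_sum fun i hi => hf i hi k)

lemma mul (hf : FourierDominated f F) (hg : FourierDominated g G)
    (hsum : Summable (fourierCoeff f)) : FourierDominated (f * g) (seqConv F G) := fun k => by
  rw [← (hasSum_fourierCoeff_mul hsum g k).tsum_eq]
  refine enorm_tsum_le_tsum_enorm.trans (ENNReal.tsum_le_tsum fun j => ?_)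
  rw [enorm_mul]
  exact mul_le_mul' (hf j) (hg _)

lemma wienerNorm_le (hf : FourierDominated f F) (c : ℝ) :
    wienerNorm c f ≤ ∑' k, freqWeight c k * F k :=
  ENNReal.tsum_le_tsum fun k => by gcongr; exact hf k

end FourierDominated

lemma tsum_enorm_fourierCoeff_le_wienerNorm {c : ℝ} (hc : 0 ≤ c) (f : C(AddCircle T, ℂ)) :
    ∑' k, ‖fourierCoeff f k‖ₑ ≤ wienerNorm c f :=
  ENNReal.tsum_le_tsum fun k => le_mul_of_one_le_left' (one_le_freqWeight hc k)

lemma summable_fourierCoeff_of_wienerNorm_ne_top {c : ℝ} (hc : 0 ≤ c) {f : C(AddCircle T, ℂ)}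
    (hf : wienerNorm c f ≠ ⊤) : Summable (fourierCoeff f) :=
  .of_enorm (ne_top_of_le_ne_top hf (tsum_enorm_fourierCoeff_le_wienerNorm hc f))

lemma wienerNorm_mul_le {c : ℝ} (hc : 0 ≤ c) {f : C(AddCircle T, ℂ)} (hf : wienerNorm c f ≠ ⊤)
    (g : C(AddCircle T, ℂ)) : wienerNorm c (f * g) ≤ wienerNorm c f * wienerNorm c g :=
  (((FourierDominated.self f).mul (.self g)
    (summable_fourierCoeff_of_wienerNorm_ne_top hc hf)).wienerNorm_le c).trans
      (tsum_freqWeight_mul_seqConv_le hc _ _)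

lemma wienerNorm_one (c : ℝ) : wienerNorm c (1 : C(AddCircle T, ℂ)) = 1 := by
  rw [wienerNorm, tsum_eq_single 0 fun k hk => by rw [fourierCoeff_one, if_neg hk]; simp]
  rw [fourierCoeff_one, if_pos rfl, enorm_one, mul_one, freqWeight_apply_zero]

lemma wienerNorm_pow_le {c : ℝ} (hc : 0 ≤ c) {f : C(AddCircle T, ℂ)} (hf : wienerNorm c f ≠ ⊤)
    (m : ℕ) : wienerNorm c (f ^ m) ≤ wienerNorm c f ^ m := by
  induction m with
  | zero => simp [wienerNorm_one]
  | succ m ih =>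
    rw [pow_succ', pow_succ']
    exact (wienerNorm_mul_le hc hf _).trans (by gcongr)

lemma wienerNorm_sum_le {ι : Type*} (c : ℝ) (s : Finset ι) (f : ι → C(AddCircle T, ℂ)) :
    wienerNorm c (∑ i ∈ s, f i) ≤ ∑ i ∈ s, wienerNorm c (f i) := by
  refine ((FourierDominated.sum s fun i _ => .self (f i)).wienerNorm_le c).trans_eq ?_
  simp_rw [Finset.mul_sum, Summable.tsum_finsetSum fun _ _ => ENNReal.summable, wienerNorm]

lemma wienerNorm_nsmul_le (c : ℝ) (a : ℕ) (f : C(AddCircle T, ℂ)) :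
    wienerNorm c (a • f) ≤ a * wienerNorm c f := by
  simpa using wienerNorm_sum_le c (Finset.range a) fun _ => f

lemma enorm_le_wienerNorm {c : ℝ} (hc : 0 ≤ c) (f : C(AddCircle T, ℂ)) :
    ‖f‖ₑ ≤ wienerNorm c f := by
  by_cases hf : wienerNorm c f = ⊤
  · exact hf ▸ le_top
  have hsum := hasSum_fourier_series_of_summable
    (summable_fourierCoeff_of_wienerNorm_ne_top hc hf)
  refine le_trans ?_ (tsum_enorm_fourierCoeff_le_wienerNorm hc f)
  calc ‖f‖ₑ = ‖∑' k, fourierCoeff f k • fourier k‖ₑ := by rw [hsum.tsum_eq]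
    _ ≤ ∑' k, ‖fourierCoeff f k • (fourier k : C(AddCircle T, ℂ))‖ₑ := enorm_tsum_le_tsum_enorm
    _ = ∑' k, ‖fourierCoeff f k‖ₑ := by
        refine tsum_congr fun k => ?_
        rw [enorm_smul, ← ofReal_norm (fourier k), fourier_norm, ENNReal.ofReal_one, mul_one]

lemma enorm_fourierCoeff_zero_mul_le {c : ℝ} (hc : 0 ≤ c) {f g : C(AddCircle T, ℂ)} {M : ℝ≥0∞}
    (hf : wienerNorm c f ≠ ⊤) (hg : FourierDominated g fun k => M * freqWeight c k) :
    ‖fourierCoeff (f * g : C(AddCircle T, ℂ)) 0‖ₑ ≤ M * wienerNorm c f := by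
  refine ((FourierDominated.self f).mul hg
    (summable_fourierCoeff_of_wienerNorm_ne_top hc hf) 0).trans_eq ?_
  simp_rw [seqConv, wienerNorm, ← ENNReal.tsum_mul_left, zero_sub, freqWeight_apply_neg]
  exact tsum_congr fun j => by ring

/-- `f` is a trigonometric polynomial of degree at most `N`. -/
def BandLimited (N : ℕ) (f : C(AddCircle T, ℂ)) : Prop :=
  ∀ k : ℤ, N < k.natAbs → fourierCoeff f k = 0

namespace BandLimited

variable {M N : ℕ} {f g : C(AddCircle T, ℂ)}

lemma mono (hf : BandLimited M f) (h : M ≤ N) : BandLimited N f :=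
  fun k hk => hf k (h.trans_lt hk)

lemma one : BandLimited 0 (1 : C(AddCircle T, ℂ)) := fun k hk => by
  rw [fourierCoeff_one, if_neg (Int.natAbs_pos.1 hk)]

lemma eq_zero_of_notMem (hf : BandLimited M f) {k : ℤ} (hk : k ∉ Finset.Icc (-(M : ℤ)) M) :
    fourierCoeff f k = 0 := hf k (by rw [Finset.mem_Icc] at hk; omega)

lemma mul (hf : BandLimited M f) (hg : BandLimited N g) : BandLimited (M + N) (f * g) :=
  fun k hk => by
  have hsum : Summable (fourierCoeff f) :=
    summable_of_ne_finset_zero (s := Finset.Icc (-(M : ℤ)) M) fun _ => hf.eq_zero_of_notMem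
  rw [← (hasSum_fourierCoeff_mul hsum g k).tsum_eq, ← tsum_zero]
  refine tsum_congr fun j => ?_
  by_cases hj : M < j.natAbs
  · rw [hf j hj, zero_mul]
  · rw [hg (k - j) (by omega), mul_zero]

lemma pow (hf : BandLimited N f) (m : ℕ) : BandLimited (m * N) (f ^ m) := by
  induction m with
  | zero => simpa using one
  | succ m ih =>
    rw [pow_succ, Nat.succ_mul]
    exact ih.mul hf

lemma wienerNorm_le {c : ℝ} (hc : 0 ≤ c) (hf : BandLimited M f) :
    wienerNorm c f ≤ 2 * (1 + M) ^ (c + 1) * ‖f‖ₑ := by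
  have term_le : ∀ k ∈ Finset.Icc (-(M : ℤ)) M,
      freqWeight c k * ‖fourierCoeff f k‖ₑ ≤ (1 + M) ^ c * ‖f‖ₑ := fun k hk => by
    have hkM : ‖k‖ₑ ≤ M := by
      rw [← ofReal_norm, Int.norm_eq_abs, ← ENNReal.ofReal_natCast]
      refine ENNReal.ofReal_le_ofReal (abs_le.2 ?_)
      exact_mod_cast Finset.mem_Icc.1 hk
    have hcoeff : ‖fourierCoeff f k‖ₑ ≤ ‖f‖ₑ := enorm_le_iff_norm_le.2 (norm_fourierCoeff_le f k)
    exact mul_le_mul' (ENNReal.rpow_le_rpow (add_le_add_right hkM 1) hc) hcoeff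
  have card_eq : ((M : ℤ) + 1 - -M).toNat = 2 * M + 1 := by omega
  rw [wienerNorm, tsum_eq_sum fun k hk => by rw [hf.eq_zero_of_notMem hk]; simp]
  calc ∑ k ∈ Finset.Icc (-(M : ℤ)) M, freqWeight c k * ‖fourierCoeff f k‖ₑ
      ≤ (2 * M + 1) * ((1 + M) ^ c * ‖f‖ₑ) := by
        refine (Finset.sum_le_card_nsmul _ _ _ term_le).trans_eq ?_
        rw [Int.card_Icc, card_eq, nsmul_eq_mul]
        push_cast
        rfl
    _ ≤ (2 * (1 + M)) * ((1 + M) ^ c * ‖f‖ₑ) := by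
        rw [mul_add, mul_one, add_comm]
        gcongr
        exact one_le_two
    _ = 2 * (1 + M) ^ (c + 1) * ‖f‖ₑ := by
        rw [ENNReal.rpow_add _ _ (by simp) (by finiteness), ENNReal.rpow_one]
        ring

end BandLimited

lemma exists_pow_mul_geom_le (K N : ℕ) {q R : ℝ} (hq : 0 < q) (hqR : q < R) :
    ∃ C : ℝ, ∀ m : ℕ, (1 + (m * N : ℕ)) ^ K * q ^ m ≤ C * R ^ m := by
  have hR : 0 < R := hq.trans hqR
  have hlim := tendsto_pow_const_mul_const_pow_of_abs_lt_one K (r := q / R)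
    (by rwa [abs_of_pos (by positivity), div_lt_one hR])
  obtain ⟨D, hD⟩ := hlim.bddAbove_range
  refine ⟨(N + 1) ^ K * D * (R / q), fun m => ?_⟩
  have hD' : ((m + 1 : ℕ) : ℝ) ^ K * (q / R) ^ (m + 1) ≤ D := hD ⟨m + 1, rfl⟩
  have hbase : 1 + ((m * N : ℕ) : ℝ) ≤ (N + 1) * (m + 1 : ℕ) := by
    push_cast
    nlinarith [m.cast_nonneg (α := ℝ), N.cast_nonneg (α := ℝ)]
  calc (1 + ((m * N : ℕ) : ℝ)) ^ K * q ^ m ≤ ((N + 1) * (m + 1 : ℕ)) ^ K * q ^ m := by gcongr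
    _ = (N + 1) ^ K * (((m + 1 : ℕ) : ℝ) ^ K * (q / R) ^ (m + 1)) * (R / q) * R ^ m := by
        rw [mul_pow, div_pow]
        field_simp
        ring
    _ ≤ (N + 1) ^ K * D * (R / q) * R ^ m := by gcongr

lemma exists_rpow_mul_geom_le (d : ℝ) (N : ℕ) {q R : ℝ} (hq : 0 < q) (hqR : q < R) :
    ∃ C : ℝ≥0∞, C ≠ ⊤ ∧ ∀ m : ℕ, 2 * (1 + ((m * N : ℕ) : ℝ≥0∞)) ^ d * ENNReal.ofReal q ^ m ≤
      C * ENNReal.ofReal R ^ m := by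
  obtain ⟨K, hK⟩ := exists_nat_ge d
  obtain ⟨C, hC⟩ := exists_pow_mul_geom_le K N hq hqR
  refine ⟨2 * ENNReal.ofReal C, by finiteness, fun m => ?_⟩
  have hbase : (1 + ((m * N : ℕ) : ℝ≥0∞)) = ENNReal.ofReal (1 + (m * N : ℕ)) := by
    rw [ENNReal.ofReal_add zero_le_one (Nat.cast_nonneg _), ENNReal.ofReal_one,
      ENNReal.ofReal_natCast]
  calc 2 * (1 + ((m * N : ℕ) : ℝ≥0∞)) ^ d * ENNReal.ofReal q ^ m
      ≤ 2 * (1 + ((m * N : ℕ) : ℝ≥0∞)) ^ (K : ℝ) * ENNReal.ofReal q ^ m := by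
        gcongr
        simp
    _ = 2 * ENNReal.ofReal ((1 + (m * N : ℕ)) ^ K * q ^ m) := by
        rw [ENNReal.rpow_natCast, hbase, ENNReal.ofReal_mul (by positivity),
          ENNReal.ofReal_pow (by positivity), ENNReal.ofReal_pow hq.le, mul_assoc]
    _ ≤ 2 * ENNReal.ofReal (C * R ^ m) := by gcongr 2 * ENNReal.ofReal ?_; exact hC m
    _ = 2 * ENNReal.ofReal C * ENNReal.ofReal R ^ m := by
        rw [ENNReal.ofReal_mul' (pow_nonneg (hq.trans hqR).le _),
          ENNReal.ofReal_pow (hq.trans hqR).le, mul_assoc]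

lemma BandLimited.wienerNorm_add_pow_le {c : ℝ} (hc : 0 ≤ c) {N : ℕ} {p e : C(AddCircle T, ℂ)}
    {ρ η : ℝ≥0∞} (hp : BandLimited N p) (hpρ : ‖p‖ₑ ≤ ρ) (he : wienerNorm c e ≤ η) (hη : η ≠ ⊤)
    (m : ℕ) :
    wienerNorm c ((p + e) ^ m) ≤ 2 * (1 + ((m * N : ℕ) : ℝ≥0∞)) ^ (c + 1) * (ρ + η) ^ m := by
  set P : ℝ≥0∞ := 2 * (1 + ((m * N : ℕ) : ℝ≥0∞)) ^ (c + 1)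
  have hpow (j : ℕ) (hj : j ≤ m) : wienerNorm c (p ^ j) ≤ P * ‖p‖ₑ ^ j := by
    have hband := (hp.pow j).mono (Nat.mul_le_mul_right N hj)
    have henorm : ‖p ^ j‖ₑ ≤ ‖p‖ₑ ^ j := by
      simpa only [enorm_eq_nnnorm, ← ENNReal.coe_pow, ENNReal.coe_le_coe] using nnnorm_pow_le p j
    exact (hband.wienerNorm_le hc).trans (by gcongr)
  have hP : P ≠ ⊤ :=
    ENNReal.mul_ne_top (by simp) (ENNReal.rpow_ne_top_of_nonneg (by linarith) (by finiteness))
  have hterm (j : ℕ) (hj : j ∈ Finset.range (m + 1)) :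
      wienerNorm c (p ^ j * e ^ (m - j) * (m.choose j : C(AddCircle T, ℂ))) ≤
        P * (ρ ^ j * η ^ (m - j) * m.choose j) := by
    have hj' := hpow j (by simpa [Nat.lt_succ_iff] using hj)
    have hpe : wienerNorm c (p ^ j * e ^ (m - j)) ≤ P * ρ ^ j * η ^ (m - j) :=
      (wienerNorm_mul_le hc (ne_top_of_le_ne_top (by finiteness) hj') _).trans <| mul_le_mul'
        (hj'.trans (by gcongr))
        ((wienerNorm_pow_le hc (ne_top_of_le_ne_top hη he) _).trans (by gcongr))
    rw [mul_comm _ (m.choose j : C(AddCircle T, ℂ)), ← nsmul_eq_mul]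
    calc _ ≤ m.choose j * wienerNorm c (p ^ j * e ^ (m - j)) := wienerNorm_nsmul_le _ _ _
      _ ≤ m.choose j * (P * ρ ^ j * η ^ (m - j)) := by gcongr
      _ = _ := by ring
  rw [add_pow, add_pow, Finset.mul_sum]
  exact (wienerNorm_sum_le _ _ _).trans (Finset.sum_le_sum hterm)

/-- The part of the Fourier series of `f` with frequencies in `s`. -/
def fourierPartialSum (s : Finset ℤ) (f : C(AddCircle T, ℂ)) : C(AddCircle T, ℂ) :=
  ∑ k ∈ s, fourierCoeff f k • fourier k

lemma fourierCoeff_fourierPartialSum (s : Finset ℤ) (f : C(AddCircle T, ℂ)) (k : ℤ) :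
    fourierCoeff (fourierPartialSum s f) k = if k ∈ s then fourierCoeff f k else 0 := by
  rw [← fourierCoeffCLM_apply, fourierPartialSum, map_sum]
  simp [fourierCoeff_fourier, Pi.single_apply]

lemma FourierDominated.wienerNorm_sub_fourierPartialSum_le {f : C(AddCircle T, ℂ)}
    {F : ℤ → ℝ≥0∞} (hf : FourierDominated f F) (c : ℝ) (s : Finset ℤ) :
    wienerNorm c (f - fourierPartialSum s f) ≤ ∑' k : {k // k ∉ s}, freqWeight c k * F k := by
  refine le_trans ?_ (tsum_subtype {k | k ∉ s} fun k => freqWeight c k * F k).ge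
  refine ENNReal.tsum_le_tsum fun k => ?_
  rw [← fourierCoeffCLM_apply, map_sub, fourierCoeffCLM_apply, fourierCoeffCLM_apply,
    fourierCoeff_fourierPartialSum]
  by_cases hk : k ∈ s
  · simp [hk]
  · rw [if_neg hk, sub_zero, indicator_of_mem (by exact hk)]
    gcongr
    exact hf k

/-- A uniform form of Gelfand's formula: in the Wiener algebra the spectral radius is the sup norm.
Up to an error that is small in the algebra, `x` is a trigonometric polynomial `p`, and the algebra
norm of `p ^ m` exceeds its sup norm by a factor polynomial in `m` only. -/
lemma exists_wienerNorm_pow_le {c : ℝ} (hc : 0 ≤ c) {X : ℤ → ℝ≥0∞}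
    (hX : ∑' k, freqWeight c k * X k ≠ ⊤) {r R : ℝ} (hr : 0 ≤ r) (hR : r < R) :
    ∃ C : ℝ≥0∞, C ≠ ⊤ ∧ ∀ x : C(AddCircle T, ℂ), ‖x‖ ≤ r → FourierDominated x X →
      ∀ m : ℕ, wienerNorm c (x ^ m) ≤ C * ENNReal.ofReal R ^ m := by
  obtain ⟨η, hη, hηR⟩ : ∃ η, 0 < η ∧ r + 2 * η < R := ⟨(R - r) / 3, by linarith, by linarith⟩
  obtain ⟨s, hs⟩ := ((tendsto_order.1 (ENNReal.tendsto_tsum_compl_atTop_zero hX)).2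
    (ENNReal.ofReal η) (by simpa using hη)).exists
  set N := s.sup Int.natAbs
  obtain ⟨C, hC, hCm⟩ := exists_rpow_mul_geom_le (c + 1) N (q := r + 2 * η) (by linarith) hηR
  refine ⟨C, hC, fun x hx hxX m => ?_⟩
  set p := fourierPartialSum s x
  set e := x - p with he_def
  have he : wienerNorm c e ≤ ENNReal.ofReal η :=
    (hxX.wienerNorm_sub_fourierPartialSum_le c s).trans hs.le
  have hp : ‖p‖ₑ ≤ ENNReal.ofReal (r + η) := by
    have hxe : ‖x‖ₑ ≤ ENNReal.ofReal r := by rw [← ofReal_norm]; exact ENNReal.ofReal_le_ofReal hx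
    calc ‖p‖ₑ = ‖x - e‖ₑ := by rw [he_def, sub_sub_cancel]
      _ ≤ ‖x‖ₑ + ‖e‖ₑ := enorm_sub_le
      _ ≤ ENNReal.ofReal r + ENNReal.ofReal η :=
          add_le_add hxe ((enorm_le_wienerNorm hc e).trans he)
      _ = ENNReal.ofReal (r + η) := (ENNReal.ofReal_add hr hη.le).symm
  have hband : BandLimited N p := fun k hk => by
    rw [fourierCoeff_fourierPartialSum, if_neg fun hks =>
      hk.not_ge (Finset.le_sup (f := Int.natAbs) hks)]
  calc wienerNorm c (x ^ m) = wienerNorm c ((p + e) ^ m) := by rw [he_def, add_sub_cancel]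
    _ ≤ _ := hband.wienerNorm_add_pow_le hc hp he (by finiteness) m
    _ = 2 * (1 + ((m * N : ℕ) : ℝ≥0∞)) ^ (c + 1) * ENNReal.ofReal (r + 2 * η) ^ m := by
        rw [← ENNReal.ofReal_add (by positivity) hη.le, add_assoc, ← two_mul]
    _ ≤ C * ENNReal.ofReal R ^ m := hCm m

end WienerAlgebra

/-! ### Power series in the Wiener algebra -/

/-- The power series `∑ₙ aₙ x ^ (n + 1)` without constant term, evaluated in a normed algebra. -/
def tailSeries {A : Type*} [NormedRing A] [NormedAlgebra ℂ A] (a : ℕ → ℂ) (x : A) : A :=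
  ∑' n, a n • x ^ (n + 1)

lemma norm_smul_pow_succ_le {A : Type*} [NormedRing A] [NormedAlgebra ℂ A] {R : ℝ} {x : A}
    (hx : ‖x‖ ≤ R) (c : ℂ) (n : ℕ) : ‖c • x ^ (n + 1)‖ ≤ ‖c‖ * R ^ n * ‖x‖ := by
  calc ‖c • x ^ (n + 1)‖ ≤ ‖c‖ * ‖x‖ ^ (n + 1) := by
        rw [norm_smul]
        gcongr
        exact norm_pow_le' x n.succ_pos
    _ = ‖c‖ * ‖x‖ ^ n * ‖x‖ := by ring
    _ ≤ ‖c‖ * R ^ n * ‖x‖ := by gcongr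

lemma summable_tailSeries {A : Type*} [NormedRing A] [NormedAlgebra ℂ A] [CompleteSpace A]
    {a : ℕ → ℂ} {R : ℝ} (ha : Summable fun n => ‖a n‖ * R ^ n) {x : A} (hx : ‖x‖ ≤ R) :
    Summable fun n => a n • x ^ (n + 1) :=
  .of_norm_bounded (ha.mul_right ‖x‖) fun n => norm_smul_pow_succ_le hx (a n) n

lemma norm_tailSeries_le {A : Type*} [NormedRing A] [NormedAlgebra ℂ A]
    {a : ℕ → ℂ} {R : ℝ} (ha : Summable fun n => ‖a n‖ * R ^ n) {x : A} (hx : ‖x‖ ≤ R) :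
    ‖tailSeries a x‖ ≤ (∑' n, ‖a n‖ * R ^ n) * ‖x‖ :=
  tsum_of_norm_bounded (ha.hasSum.mul_right ‖x‖) fun n => norm_smul_pow_succ_le hx (a n) n

lemma tailSeries_continuousMap_apply {X : Type*} [TopologicalSpace X] [CompactSpace X] {a : ℕ → ℂ}
    {R : ℝ} (ha : Summable fun n => ‖a n‖ * R ^ n) {x : C(X, ℂ)} (hx : ‖x‖ ≤ R) (t : X) :
    tailSeries a x t = tailSeries a (x t) := by
  have h := (summable_tailSeries ha hx).hasSum.mapL (ContinuousMap.evalCLM ℂ t)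
  exact h.tsum_eq.symm

lemma norm_tailSeries_continuousMap_apply_le {X : Type*} [TopologicalSpace X] [CompactSpace X]
    {a : ℕ → ℂ} {R : ℝ} (ha : Summable fun n => ‖a n‖ * R ^ n) {x : C(X, ℂ)} (hx : ‖x‖ ≤ R)
    (t : X) : ‖tailSeries a x t‖ ≤ (∑' n, ‖a n‖ * R ^ n) * ‖x t‖ := by
  rw [tailSeries_continuousMap_apply ha hx]
  exact norm_tailSeries_le ha ((x.norm_coe_le_norm t).trans hx)

/-- The Taylor coefficients at the origin of `x ↦ (1 - x) ^ (-β)`, without the constant one. -/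
def negBinomTail (β : ℝ) (n : ℕ) : ℂ := (Ring.choose (β + (n + 1 : ℕ) - 1) (n + 1) : ℝ)

lemma hasSum_one_sub_rpow (β : ℝ) {x : ℝ} (h0 : 0 ≤ x) (h1 : x < 1) :
    HasSum (fun n : ℕ => Ring.choose (β + n - 1) n * x ^ n) (1 / (1 - x) ^ β) := by
  have hx : x ∈ Metric.eball 0 1 := by
    rw [Metric.mem_eball, edist_zero_right, Real.enorm_of_nonneg h0]
    exact ENNReal.ofReal_lt_one.2 h1
  simpa [FormalMultilinearSeries.ofScalars_apply_eq, mul_comm] using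
    (Real.one_div_one_sub_rpow_hasFPowerSeriesOnBall_zero β).hasSum hx

lemma hasSum_negBinomTail (β : ℝ) {x : ℝ} (h0 : 0 ≤ x) (h1 : x < 1) :
    HasSum (fun n => negBinomTail β n * (x : ℂ) ^ (n + 1)) (1 / (1 - x) ^ β - 1 : ℝ) := by
  have h := (hasSum_nat_add_iff' 1).2 (hasSum_one_sub_rpow β h0 h1)
  simpa [negBinomTail] using h.mapL Complex.ofRealCLM

lemma tailSeries_negBinomTail (β : ℝ) {x : ℝ} (h0 : 0 ≤ x) (h1 : x < 1) :
    tailSeries (negBinomTail β) (x : ℂ) = (1 / (1 - x) ^ β - 1 : ℝ) :=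
  (hasSum_negBinomTail β h0 h1).tsum_eq

lemma summable_norm_negBinomTail_mul_pow (β : ℝ) {R : ℝ} (h0 : 0 < R) (h1 : R < 1) :
    Summable fun n => ‖negBinomTail β n‖ * R ^ n := by
  refine ((hasSum_negBinomTail β h0.le h1).summable.norm.mul_right R⁻¹).congr fun n => ?_
  rw [norm_mul, norm_pow, Complex.norm_of_nonneg h0.le, pow_succ]
  field_simp

section Pairing

variable {T : ℝ} [Fact (0 < T)]

lemma FourierDominated.mul_freqWeight {κ b q : ℝ} (hκ : 0 ≤ κ) (hb : κ ≤ b) (hq : 0 ≤ q + κ)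
    {x y : C(AddCircle T, ℂ)} {A B H : ℤ → ℝ≥0∞} {δ : ℝ≥0∞} (hsum : Summable (fourierCoeff x))
    (hx : FourierDominated x fun k => δ * seqConv A B k) (hy : FourierDominated y H) :
    FourierDominated (x * y) fun k => seqConvConst (b + q) *
      (δ * (weightedL2Norm κ A * weightedL2Norm b B * weightedL2Norm q H)) * freqWeight κ k := by
  refine (hx.mul hy hsum).mono fun k => ?_
  calc seqConv (fun k => δ * seqConv A B k) H k = δ * seqConv A (seqConv B H) k := by
        rw [seqConv_const_mul_left, seqConv_assoc]
    _ = δ * (freqWeight (-κ) k * seqConv A (seqConv B H) k) * freqWeight κ k := by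
        rw [mul_assoc δ, mul_right_comm, mul_comm (freqWeight (-κ) k),
          freqWeight_mul_freqWeight_neg, one_mul]
    _ ≤ δ * (seqConvConst (b + q) *
          (weightedL2Norm κ A * weightedL2Norm b B * weightedL2Norm q H)) * freqWeight κ k := by
        gcongr δ * ?_ * _
        exact freqWeight_neg_mul_seqConv_seqConv_le hκ hb hq A B H k
    _ = _ := by ring

lemma exists_enorm_fourierCoeff_mul_tailSeries_le {κ : ℝ} (hκ : 0 ≤ κ) {a : ℕ → ℂ} {r R : ℝ}
    (hr : 0 ≤ r) (hR : r < R) (ha : Summable fun n => ‖a n‖ * R ^ n) {X : ℤ → ℝ≥0∞}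
    (hX : ∑' k, freqWeight κ k * X k ≠ ⊤) :
    ∃ C : ℝ≥0∞, C ≠ ⊤ ∧ ∀ (x y z : C(AddCircle T, ℂ)) (M : ℝ≥0∞), ‖x‖ ≤ r →
      FourierDominated x X → FourierDominated (x * y) (fun k => M * freqWeight κ k) →
      wienerNorm κ z ≠ ⊤ →
      ‖fourierCoeff (y * z * tailSeries a x : C(AddCircle T, ℂ)) 0‖ₑ ≤
        C * M * wienerNorm κ z := by
  obtain ⟨C, hC, hCpow⟩ := exists_wienerNorm_pow_le (T := T) hκ hX hr hR
  have hS : ∑' n, ‖a n‖ₑ * ENNReal.ofReal R ^ n ≠ ⊤ := by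
    convert ha.tsum_ofReal_ne_top using 4 with n
    rw [ENNReal.ofReal_mul (norm_nonneg _), ofReal_norm, ENNReal.ofReal_pow (hr.trans hR.le)]
  refine ⟨C * ∑' n, ‖a n‖ₑ * ENNReal.ofReal R ^ n, by finiteness, fun x y z M hx hxX hxy hz => ?_⟩
  have hterm (n : ℕ) : ‖fourierCoeffCLM 0 (y * z * (a n • x ^ (n + 1)))‖ₑ ≤
      C * M * wienerNorm κ z * (‖a n‖ₑ * ENNReal.ofReal R ^ n) := by
    have hzx : wienerNorm κ (z * x ^ n) ≤ wienerNorm κ z * (C * ENNReal.ofReal R ^ n) :=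
      (wienerNorm_mul_le hκ hz _).trans (by gcongr; exact hCpow x hx hxX n)
    have hregroup : y * z * (a n • x ^ (n + 1)) = a n • ((z * x ^ n) * (x * y)) := by
      rw [mul_smul_comm, pow_succ]
      ring_nf
    rw [hregroup, map_smul, enorm_smul, fourierCoeffCLM_apply]
    calc ‖a n‖ₑ * ‖fourierCoeff (z * x ^ n * (x * y) : C(AddCircle T, ℂ)) 0‖ₑ
        ≤ ‖a n‖ₑ * (M * (wienerNorm κ z * (C * ENNReal.ofReal R ^ n))) := by
          gcongr
          exact (enorm_fourierCoeff_zero_mul_le hκ (ne_top_of_le_ne_top (by finiteness) hzx)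
            hxy).trans (by gcongr)
      _ = _ := by ring
  have hseries := ((summable_tailSeries ha (hx.trans hR.le)).hasSum.mul_left (y * z)).mapL
    (fourierCoeffCLM 0)
  calc ‖fourierCoeff (y * z * tailSeries a x : C(AddCircle T, ℂ)) 0‖ₑ
      ≤ ∑' n, ‖fourierCoeffCLM 0 (y * z * (a n • x ^ (n + 1)))‖ₑ := by
        rw [← fourierCoeffCLM_apply, tailSeries, ← hseries.tsum_eq]
        exact enorm_tsum_le_tsum_enorm
    _ ≤ ∑' n, C * M * wienerNorm κ z * (‖a n‖ₑ * ENNReal.ofReal R ^ n) :=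
        ENNReal.tsum_le_tsum hterm
    _ = _ := by rw [ENNReal.tsum_mul_left]; ring

end Pairing

/-! ### Translates and segment means -/

section SegmentMean

variable {T : ℝ}

lemma continuousMap_addCircle_ext {f g : C(AddCircle T, ℂ)} (h : ∀ u : ℝ, f u = g u) : f = g :=
  ContinuousMap.ext fun x => QuotientAddGroup.induction_on x h

/-- The right translate `u ↦ f (u + t)` of a function on the circle. -/
def rightTranslate (t : ℝ) (f : C(AddCircle T, ℂ)) : C(AddCircle T, ℂ) :=
  f.comp (.addRight (t : AddCircle T))

lemma rightTranslate_apply (t : ℝ) (f : C(AddCircle T, ℂ)) (x : AddCircle T) :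
    rightTranslate t f x = f (x + (t : AddCircle T)) := rfl

@[fun_prop]
lemma continuous_rightTranslate (f : C(AddCircle T, ℂ)) :
    Continuous fun t : ℝ => rightTranslate t f :=
  (ContinuousMap.curry ⟨fun p : ℝ × AddCircle T => f (p.2 + (p.1 : AddCircle T)), by
    have : Continuous ((↑) : ℝ → AddCircle T) := AddCircle.continuous_mk' T
    fun_prop⟩).continuous

@[fun_prop]
lemma continuous_rightTranslate_mul (w : ℝ) (f : C(AddCircle T, ℂ)) :
    Continuous fun t : ℝ => rightTranslate (t * w) f :=
  (continuous_rightTranslate f).comp (continuous_mul_const w)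

variable [Fact (0 < T)]

/-- The mean of `f` over the segments of signed length `w`, that is
`u ↦ ∫ t in 0..1, f (u + t w)`. -/
def segmentMean (w : ℝ) (f : C(AddCircle T, ℂ)) : C(AddCircle T, ℂ) :=
  ∫ t in (0 : ℝ)..1, rightTranslate (t * w) f

lemma segmentMean_apply (w : ℝ) (f : C(AddCircle T, ℂ)) (x : AddCircle T) :
    segmentMean w f x = ∫ t in (0 : ℝ)..1, rightTranslate (t * w) f x :=
  ((ContinuousMap.evalCLM ℂ x).intervalIntegral_comp_comm
    ((continuous_rightTranslate_mul w f).intervalIntegrable _ _)).symm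

@[simp]
lemma segmentMean_zero (f : C(AddCircle T, ℂ)) : segmentMean 0 f = f := by
  ext x
  simp [segmentMean_apply, rightTranslate_apply]

lemma continuous_segmentMean (f : C(AddCircle T, ℂ)) : Continuous fun w => segmentMean w f :=
  intervalIntegral.continuous_parametric_intervalIntegral_of_continuous'
    (f := fun w t => rightTranslate (t * w) f)
    ((continuous_rightTranslate f).comp (continuous_snd.mul continuous_fst)) 0 1

lemma norm_segmentMean_le (w : ℝ) (f : C(AddCircle T, ℂ)) : ‖segmentMean w f‖ ≤ ‖f‖ := by
  have h (t : ℝ) : ‖rightTranslate (t * w) f‖ ≤ ‖f‖ :=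
    (ContinuousMap.norm_le _ (norm_nonneg f)).2 fun x => f.norm_coe_le_norm _
  simpa [segmentMean] using
    intervalIntegral.norm_integral_le_of_norm_le_const (a := 0) (b := 1) fun t _ => h t

/-- `f'` is the derivative of `f`, as functions on the circle. -/
def HasCircleDeriv (f f' : C(AddCircle T, ℂ)) : Prop :=
  ∀ u : ℝ, HasDerivAt (fun v : ℝ => f v) (f' u) u

lemma HasCircleDeriv.mul_segmentMean {f f' : C(AddCircle T, ℂ)}
    (h : HasCircleDeriv f f') (w u : ℝ) :
    (w : ℂ) * segmentMean w f' u = f ((u + w : ℝ) : AddCircle T) - f u := by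
  have hderiv (t : ℝ) : HasDerivAt (fun t : ℝ => f ((u + t * w : ℝ) : AddCircle T))
      ((w : ℂ) * rightTranslate (t * w) f' u) t := by
    rw [rightTranslate_apply, ← AddCircle.coe_add]
    simpa [Function.comp_def] using
      HasDerivAt.scomp t (h (u + t * w)) (((hasDerivAt_id t).mul_const w).const_add u)
  have hcont : Continuous fun t : ℝ => (w : ℂ) * rightTranslate (t * w) f' u :=
    continuous_const.mul ((ContinuousMap.evalCLM ℂ (u : AddCircle T)).continuous.comp
      (continuous_rightTranslate_mul w f'))
  rw [segmentMean_apply, ← intervalIntegral.integral_const_mul,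
    intervalIntegral.integral_eq_sub_of_hasDerivAt (fun t _ => hderiv t)
      (hcont.intervalIntegrable _ _)]
  simp

lemma HasCircleDeriv.fourierCoeff_eq {f f' : C(AddCircle T, ℂ)} (h : HasCircleDeriv f f')
    (k : ℤ) : fourierCoeff f' k = 2 * Real.pi * Complex.I * k / T * fourierCoeff f k := by
  have hcont (g : C(AddCircle T, ℂ)) : Continuous fun u : ℝ => g u :=
    g.continuous.comp (AddCircle.continuous_mk' T)
  have hparts := intervalIntegral.integral_mul_deriv_eq_deriv_mul (a := 0) (b := 0 + T)
    (fun u _ => hasDerivAt_fourier_neg T k u) (fun u _ => h u)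
    ((continuous_const.mul (hcont (fourier (-k)))).intervalIntegrable _ _)
    ((hcont f').intervalIntegrable _ _)
  have hboundary (g : C(AddCircle T, ℂ)) :
      g ((0 + T : ℝ) : AddCircle T) = g ((0 : ℝ) : AddCircle T) := by
    rw [zero_add, AddCircle.coe_period, AddCircle.coe_zero]
  simp_rw [hboundary, sub_self, zero_sub, mul_assoc (_ / (T : ℂ)),
    intervalIntegral.integral_const_mul] at hparts
  simp_rw [fourierCoeff_eq_intervalIntegral _ k 0, smul_eq_mul, hparts, Complex.real_smul]
  ring

lemma fourierCoeff_rightTranslate (t : ℝ) (f : C(AddCircle T, ℂ)) (k : ℤ) :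
    fourierCoeff (rightTranslate t f) k = fourier k (t : AddCircle T) * fourierCoeff f k := by
  have hshift (x : AddCircle T) : fourier (-k) x * f (x + (t : AddCircle T)) =
      fourier k (t : AddCircle T) *
        (fourier (-k) (x + (t : AddCircle T)) * f (x + (t : AddCircle T))) := by
    have hmul : (fourier (-k) (x + (t : AddCircle T)) : ℂ) =
        fourier (-k) x * fourier (-k) (t : AddCircle T) := by
      simp only [fourier_apply, smul_add, AddCircle.toCircle_add, Circle.coe_mul]
    have hinv : fourier k (t : AddCircle T) * fourier (-k) (t : AddCircle T) = 1 := by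
      rw [← fourier_add, add_neg_cancel, fourier_zero]
    rw [hmul]
    linear_combination (-fourier (-k) x * f (x + (t : AddCircle T))) * hinv
  simp_rw [fourierCoeff, rightTranslate_apply, smul_eq_mul, hshift]
  rw [integral_const_mul, integral_add_right_eq_self (fun x => fourier (-k) x * f x)]

lemma fourierCoeff_sub_rightTranslate (f : C(AddCircle T, ℂ)) (t : ℝ) (k : ℤ) :
    fourierCoeff (f - rightTranslate t f : C(AddCircle T, ℂ)) k =
      (1 - fourier k (t : AddCircle T)) * fourierCoeff f k := by
  rw [← fourierCoeffCLM_apply, map_sub, fourierCoeffCLM_apply, fourierCoeffCLM_apply,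
    fourierCoeff_rightTranslate, sub_mul, one_mul]

namespace FourierDominated

variable {f : C(AddCircle T, ℂ)} {F : ℤ → ℝ≥0∞}

lemma integral {p : ℝ → C(AddCircle T, ℂ)} (hp : Continuous p)
    (h : ∀ t ∈ Icc (0 : ℝ) 1, FourierDominated (p t) F) :
    FourierDominated (∫ t in (0 : ℝ)..1, p t) F := fun k => by
  rw [← fourierCoeffCLM_apply, ← (fourierCoeffCLM k).intervalIntegral_comp_comm
    (hp.intervalIntegrable _ _), intervalIntegral.integral_of_le zero_le_one]
  calc ‖∫ t in Ioc (0 : ℝ) 1, fourierCoeffCLM k (p t)‖ₑ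
      ≤ ∫⁻ t in Ioc (0 : ℝ) 1, ‖fourierCoeffCLM k (p t)‖ₑ := enorm_integral_le_lintegral_enorm _
    _ ≤ ∫⁻ _ in Ioc (0 : ℝ) 1, F k :=
        setLIntegral_mono' measurableSet_Ioc fun t ht => h t (Ioc_subset_Icc_self ht) k
    _ = F k := by simp

lemma translate (h : FourierDominated f F) (t : ℝ) :
    FourierDominated (rightTranslate t f) F := fun k => by
  rw [fourierCoeff_rightTranslate, enorm_mul, fourier_apply, ← ofReal_norm, Circle.norm_coe,
    ENNReal.ofReal_one, one_mul]
  exact h k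

lemma mean (h : FourierDominated f F) (w : ℝ) : FourierDominated (segmentMean w f) F :=
  .integral (continuous_rightTranslate_mul w f) fun t _ => h.translate (t * w)

end FourierDominated

end SegmentMean

/-! ### The deficit of a segment mean of unit vectors -/

section Deficit

/-- The bias-variance identity. -/
lemma integral_sub_sq_sub_sub_integral_sq {A : Type*} [NormedCommRing A] [NormedAlgebra ℝ A]
    [CompleteSpace A] {p : ℝ → A} (hp : Continuous p) (a : A) :
    (∫ t in (0 : ℝ)..1, (a - p t) ^ 2) - (a - ∫ t in (0 : ℝ)..1, p t) ^ 2 =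
      (∫ t in (0 : ℝ)..1, p t ^ 2) - (∫ t in (0 : ℝ)..1, p t) ^ 2 := by
  have hlin : ∫ t in (0 : ℝ)..1, (a ^ 2 - 2 * a * p t) =
      a ^ 2 - 2 * a * ∫ t in (0 : ℝ)..1, p t := by
    rw [intervalIntegral.integral_sub (by simp)
      ((by fun_prop : Continuous _).intervalIntegrable _ _), intervalIntegral.integral_const,
      sub_zero, one_smul]
    congr 1
    exact (ContinuousLinearMap.mul ℝ A (2 * a)).intervalIntegral_comp_comm
      (hp.intervalIntegrable _ _)
  have hexpand : ∫ t in (0 : ℝ)..1, (a - p t) ^ 2 =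
      (∫ t in (0 : ℝ)..1, (a ^ 2 - 2 * a * p t)) + ∫ t in (0 : ℝ)..1, p t ^ 2 := by
    rw [← intervalIntegral.integral_add ((by fun_prop : Continuous _).intervalIntegrable _ _)
      ((by fun_prop : Continuous _).intervalIntegrable _ _)]
    exact intervalIntegral.integral_congr fun t _ => by ring
  rw [hexpand, hlin]
  ring

variable {T : ℝ} {ι : Type*} [Fintype ι] {f : ι → C(AddCircle T, ℂ)}

lemma sum_rightTranslate_sq_eq_one (hone : ∑ j, f j ^ 2 = 1) (t : ℝ) :
    ∑ j, rightTranslate t (f j) ^ 2 = 1 := by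
  ext x
  simpa [rightTranslate_apply] using DFunLike.congr_fun hone (x + (t : AddCircle T))

variable [Fact (0 < T)]

/-- The deficit `1 - |m|²` of the segment mean `m` of the vector field with components `f j`; it
measures how far unit vectors are from being constant along segments. -/
def meanDeficit (w : ℝ) (f : ι → C(AddCircle T, ℂ)) : C(AddCircle T, ℂ) :=
  1 - ∑ j, segmentMean w (f j) ^ 2

lemma meanDeficit_zero (hone : ∑ j, f j ^ 2 = 1) : meanDeficit 0 f = 0 := by
  simp [meanDeficit, hone]

lemma continuous_meanDeficit (f : ι → C(AddCircle T, ℂ)) :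
    Continuous fun w => meanDeficit w f :=
  continuous_const.sub (continuous_finsetSum _ fun j _ => (continuous_segmentMean (f j)).pow 2)

lemma meanDeficit_eq (hone : ∑ j, f j ^ 2 = 1) (w : ℝ) :
    meanDeficit w f =
      ∑ j, ((∫ t in (0 : ℝ)..1, (f j - rightTranslate (t * w) (f j)) ^ 2) -
        (f j - segmentMean w (f j)) ^ 2) := by
  have hvariance (j : ι) := integral_sub_sq_sub_sub_integral_sq
    (continuous_rightTranslate_mul w (f j)) (f j)
  simp_rw [meanDeficit, segmentMean, hvariance, Finset.sum_sub_distrib]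
  rw [← intervalIntegral.integral_finsetSum fun j _ =>
    (by fun_prop : Continuous _).intervalIntegrable _ _]
  simp_rw [sum_rightTranslate_sq_eq_one hone]
  simp

namespace FourierDominated

variable {F E : ℤ → ℝ≥0∞} {w : ℝ}

lemma sub_mean {f : C(AddCircle T, ℂ)}
    (hE : ∀ t ∈ Icc (0 : ℝ) 1, FourierDominated (f - rightTranslate (t * w) f) E) :
    FourierDominated (f - segmentMean w f) E := by
  have hmean : f - segmentMean w f =
      ∫ t in (0 : ℝ)..1, (f - rightTranslate (t * w) f) := by
    rw [intervalIntegral.integral_sub (by simp)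
      ((continuous_rightTranslate_mul w f).intervalIntegrable _ _), intervalIntegral.integral_const,
      sub_zero, one_smul, segmentMean]
  rw [hmean]
  exact .integral (by fun_prop) hE

lemma deficit (hF : ∑' k, F k ≠ ⊤) (hf : ∀ j, FourierDominated (f j) F)
    (hone : ∑ j, f j ^ 2 = 1)
    (hE : ∀ t ∈ Icc (0 : ℝ) 1, ∀ j, FourierDominated (f j - rightTranslate (t * w) (f j)) E) :
    FourierDominated (meanDeficit w f) fun k => 2 * Fintype.card ι * seqConv E E k := by
  have hsq {g : C(AddCircle T, ℂ)} (hgF : FourierDominated g fun k => F k + F k)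
      (hgE : FourierDominated g E) : FourierDominated (g ^ 2) (seqConv E E) := by
    have hsum : ∑' k, (F k + F k) ≠ ⊤ := by
      rw [ENNReal.tsum_add]
      exact ENNReal.add_ne_top.2 ⟨hF, hF⟩
    rw [pow_two]
    exact hgE.mul hgE (.of_enorm (ne_top_of_le_ne_top hsum (ENNReal.tsum_le_tsum hgF)))
  rw [meanDeficit_eq hone]
  refine (FourierDominated.sum _ fun j _ => .sub
    (.integral (by fun_prop) fun t ht =>
      hsq ((hf j).sub ((hf j).translate _)) (hE t ht j))
    (hsq ((hf j).sub ((hf j).mean w)) (sub_mean fun t ht => hE t ht j))).mono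
      fun k => le_of_eq ?_
  rw [Finset.sum_const, Finset.card_univ, nsmul_eq_mul]
  ring

lemma deficit_coarse (hF : ∑' k, F k ≠ ⊤)
    (hf : ∀ j, FourierDominated (f j) F) (hone : ∑ j, f j ^ 2 = 1) (w : ℝ) :
    FourierDominated (meanDeficit w f) fun k => 8 * Fintype.card ι * seqConv F F k := by
  refine (deficit (E := fun k => 2 * F k) hF hf hone fun t _ j =>
    ((hf j).sub ((hf j).translate _)).mono fun k => (two_mul _).ge).mono fun k => le_of_eq ?_
  rw [seqConv_const_mul]
  ring

end FourierDominated

end Deficit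

section DeficitPairing

lemma norm_one_sub_fourier_le (k : ℤ) (t : ℝ) {τ : ℝ} (hτ : 0 ≤ τ) (hτ' : τ ≤ 1) :
    ‖1 - fourier k (t : UnitAddCircle)‖ ≤ 2 * (2 * Real.pi * |(k : ℝ)| * |t|) ^ τ := by
  set x := 2 * Real.pi * |(k : ℝ)| * |t| with hx
  have hx0 : 0 ≤ x := by positivity
  have hlin : ‖1 - fourier k (t : UnitAddCircle)‖ ≤ x := by
    have h := Real.norm_exp_I_mul_ofReal_sub_one_le (x := 2 * Real.pi * k * t)
    rw [norm_sub_rev, fourier_coe_apply]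
    convert h using 1
    · push_cast
      ring_nf
    · simp [hx, abs_of_pos Real.pi_pos]
  have hconst : ‖1 - fourier k (t : UnitAddCircle)‖ ≤ 2 := by
    refine (norm_sub_le _ _).trans_eq ?_
    rw [norm_one, fourier_apply, Circle.norm_coe]
    norm_num
  rcases le_total 1 x with h | h
  · exact hconst.trans (le_mul_of_one_le_right zero_le_two (Real.one_le_rpow h hτ))
  · calc ‖1 - fourier k (t : UnitAddCircle)‖ ≤ x := hlin
      _ ≤ x ^ τ := by simpa using Real.rpow_le_rpow_of_exponent_ge' hx0 h hτ hτ'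
      _ ≤ 2 * x ^ τ := by linarith [Real.rpow_nonneg hx0 τ]

namespace FourierDominated

variable {F : ℤ → ℝ≥0∞} {τ : ℝ}

lemma sub_rightTranslate {f : C(UnitAddCircle, ℂ)} (hf : FourierDominated f F) (hτ : 0 ≤ τ)
    (hτ' : τ ≤ 1) {w t : ℝ} (htw : |t| ≤ |w|) :
    FourierDominated (f - rightTranslate t f) fun k =>
      ENNReal.ofReal (4 * Real.pi * |w| ^ τ) * (freqWeight τ k * F k) := fun k => by
  have hpi : (2 * Real.pi) ^ τ ≤ 2 * Real.pi := by
    simpa using Real.rpow_le_rpow_of_exponent_le (by linarith [Real.pi_gt_three]) hτ'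
  have hmult : ‖1 - fourier k (t : UnitAddCircle)‖ ≤
      4 * Real.pi * |w| ^ τ * (1 + |(k : ℝ)|) ^ τ :=
    calc ‖1 - fourier k (t : UnitAddCircle)‖
        ≤ 2 * (2 * Real.pi * |(k : ℝ)| * |t|) ^ τ := norm_one_sub_fourier_le k t hτ hτ'
      _ ≤ 2 * (2 * Real.pi * (1 + |(k : ℝ)|) * |w|) ^ τ := by
          gcongr
          exact le_add_of_nonneg_left zero_le_one
      _ = 2 * (2 * Real.pi) ^ τ * |w| ^ τ * (1 + |(k : ℝ)|) ^ τ := by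
          rw [Real.mul_rpow (by positivity) (abs_nonneg _),
            Real.mul_rpow (by positivity) (by positivity)]
          ring
      _ ≤ 2 * (2 * Real.pi) * |w| ^ τ * (1 + |(k : ℝ)|) ^ τ := by gcongr
      _ = 4 * Real.pi * |w| ^ τ * (1 + |(k : ℝ)|) ^ τ := by ring
  calc ‖fourierCoeff (f - rightTranslate t f : C(UnitAddCircle, ℂ)) k‖ₑ
      = ‖1 - fourier k (t : UnitAddCircle)‖ₑ * ‖fourierCoeff f k‖ₑ := by
        rw [fourierCoeff_sub_rightTranslate, enorm_mul]
    _ ≤ ENNReal.ofReal (4 * Real.pi * |w| ^ τ * (1 + |(k : ℝ)|) ^ τ) * F k := by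
        rw [← ofReal_norm]
        gcongr
        exact hf k
    _ = ENNReal.ofReal (4 * Real.pi * |w| ^ τ) * (freqWeight τ k * F k) := by
        rw [ENNReal.ofReal_mul (by positivity), freqWeight_eq_ofReal, mul_assoc]

variable {ι : Type*} [Fintype ι] {f : ι → C(UnitAddCircle, ℂ)}

lemma deficit_fine (hF : ∑' k, F k ≠ ⊤) (hf : ∀ j, FourierDominated (f j) F)
    (hone : ∑ j, f j ^ 2 = 1) (hτ : 0 ≤ τ) (hτ' : τ ≤ 1) (w : ℝ) :
    FourierDominated (meanDeficit w f) fun k =>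
      2 * Fintype.card ι * ENNReal.ofReal (4 * Real.pi * |w| ^ τ) ^ 2 *
        seqConv (fun k => freqWeight τ k * F k) (fun k => freqWeight τ k * F k) k := by
  have hscale {t : ℝ} (ht : t ∈ Icc (0 : ℝ) 1) : |t * w| ≤ |w| := by
    rw [abs_mul, abs_of_nonneg ht.1]
    exact mul_le_of_le_one_left (abs_nonneg w) ht.2
  refine (deficit hF hf hone fun t ht j => (hf j).sub_rightTranslate hτ hτ' (hscale ht)).mono
    fun k => le_of_eq ?_
  rw [seqConv_const_mul]
  ring

lemma meanDeficit_mul {κ b q : ℝ} (hκ : 0 ≤ κ) (hb : κ ≤ b) (hq : 0 ≤ q + κ)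
    (hF : ∑' k, F k ≠ ⊤) (hf : ∀ j, FourierDominated (f j) F) (hone : ∑ j, f j ^ 2 = 1)
    (hτ : 0 ≤ τ) (hτ' : τ ≤ 1) (w : ℝ) {y : C(UnitAddCircle, ℂ)} {H : ℤ → ℝ≥0∞}
    (hy : FourierDominated y H) :
    FourierDominated (meanDeficit w f * y) fun k =>
      seqConvConst (b + q) * (2 * Fintype.card ι * ENNReal.ofReal (4 * Real.pi) ^ 2 *
        weightedL2Norm (b + τ) F ^ 2) * (ENNReal.ofReal (|w| ^ τ) ^ 2 * weightedL2Norm q H) *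
          freqWeight κ k := by
  have hF2 : ∑' k, 8 * (Fintype.card ι : ℝ≥0∞) * seqConv F F k ≠ ⊤ := by
    have h := tsum_freqWeight_mul_seqConv_le le_rfl F F
    simp only [freqWeight_zero, one_mul] at h
    rw [ENNReal.tsum_mul_left]
    exact ENNReal.mul_ne_top (by finiteness)
      (ne_top_of_le_ne_top (ENNReal.mul_ne_top hF hF) h)
  have hsum : Summable (fourierCoeff (meanDeficit w f)) := .of_enorm <|
    ne_top_of_le_ne_top hF2 (ENNReal.tsum_le_tsum (deficit_coarse hF hf hone w))
  set B : ℤ → ℝ≥0∞ := fun k => freqWeight τ k * F k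
  have hB : weightedL2Norm κ B ≤ weightedL2Norm b B := weightedL2Norm_mono_left hb B
  refine (mul_freqWeight hκ hb hq hsum (deficit_fine hF hf hone hτ hτ' w) hy).mono fun k => ?_
  calc _ ≤ seqConvConst (b + q) *
        (2 * Fintype.card ι * ENNReal.ofReal (4 * Real.pi * |w| ^ τ) ^ 2 *
          (weightedL2Norm b B * weightedL2Norm b B * weightedL2Norm q H)) * freqWeight κ k := by
        gcongr
    _ = _ := by
        rw [weightedL2Norm_freqWeight_mul, ENNReal.ofReal_mul (by positivity)]
        ring

end FourierDominated

/-- The constant is uniform in `w`: the deficit is of order `|w| ^ (2 * τ)` in a weak norm, while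
its powers are controlled in the Wiener algebra of exponent `κ` through the sup norm alone. -/
theorem exists_enorm_fourierCoeff_mul_tailSeries_meanDeficit_le {ι : Type*} [Fintype ι]
    {f : ι → C(UnitAddCircle, ℂ)} {F : ℤ → ℝ≥0∞} {a : ℕ → ℂ} {κ b q τ r R : ℝ}
    (hκ : 0 ≤ κ) (hb : κ ≤ b) (hq : 0 ≤ q + κ) (hbq : 1 / 2 < b + q) (hτ : 0 ≤ τ) (hτ' : τ ≤ 1)
    (hr : 0 ≤ r) (hR : r < R) (ha : Summable fun n => ‖a n‖ * R ^ n)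
    (hFκ : ∑' k, freqWeight κ k * F k ≠ ⊤) (hFb : weightedL2Norm (b + τ) F ≠ ⊤)
    (hf : ∀ j, FourierDominated (f j) F) (hone : ∑ j, f j ^ 2 = 1) :
    ∃ C : ℝ≥0∞, C ≠ ⊤ ∧ ∀ (w : ℝ) (y z : ι → C(UnitAddCircle, ℂ)) (H : ℤ → ℝ≥0∞),
      ‖meanDeficit w f‖ ≤ r → (∀ j, FourierDominated (y j) H) → (∀ j, FourierDominated (z j) F) →
      ‖fourierCoeff ((∑ j, y j * z j) * tailSeries a (meanDeficit w f) :
        C(UnitAddCircle, ℂ)) 0‖ₑ ≤ C * (ENNReal.ofReal (|w| ^ τ) ^ 2 * weightedL2Norm q H) := by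
  have hF : ∑' k, F k ≠ ⊤ := ne_top_of_le_ne_top hFκ <| ENNReal.tsum_le_tsum fun k =>
    le_mul_of_one_le_left' (one_le_freqWeight hκ k)
  have hX : ∑' k, freqWeight κ k * (8 * Fintype.card ι * seqConv F F k) ≠ ⊤ := by
    simp_rw [mul_left_comm (freqWeight κ _)]
    rw [ENNReal.tsum_mul_left]
    exact ENNReal.mul_ne_top (by finiteness)
      (ne_top_of_le_ne_top (ENNReal.mul_ne_top hFκ hFκ) (tsum_freqWeight_mul_seqConv_le hκ F F))
  obtain ⟨C, hC, hCbound⟩ :=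
    exists_enorm_fourierCoeff_mul_tailSeries_le (T := 1) hκ hr hR ha hX
  set K : ℝ≥0∞ := seqConvConst (b + q) *
    (2 * Fintype.card ι * ENNReal.ofReal (4 * Real.pi) ^ 2 * weightedL2Norm (b + τ) F ^ 2)
  have hK : K ≠ ⊤ := ENNReal.mul_ne_top (seqConvConst_ne_top hbq) (by finiteness)
  refine ⟨Fintype.card ι * (C * K * ∑' k, freqWeight κ k * F k), by finiteness,
    fun w y z H hw hy hz => ?_⟩
  have hwiener (j : ι) : wienerNorm κ (z j) ≤ ∑' k, freqWeight κ k * F k := (hz j).wienerNorm_le κ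
  have hterm (j : ι) : ‖fourierCoeffCLM 0 (y j * z j * tailSeries a (meanDeficit w f))‖ₑ ≤
      C * (K * (ENNReal.ofReal (|w| ^ τ) ^ 2 * weightedL2Norm q H)) *
        ∑' k, freqWeight κ k * F k :=
    (hCbound _ (y j) (z j) _ hw (.deficit_coarse hF hf hone w)
      (.meanDeficit_mul hκ hb hq hF hf hone hτ hτ' w (hy j))
      (ne_top_of_le_ne_top hFκ (hwiener j))).trans (by gcongr; exact hwiener j)
  rw [← fourierCoeffCLM_apply, Finset.sum_mul, map_sum]
  refine (enorm_sum_le _ _).trans ((Finset.sum_le_sum fun j _ => hterm j).trans_eq ?_)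
  rw [Finset.sum_const, Finset.card_univ, nsmul_eq_mul]
  ring

end DeficitPairing

/-! ### Curves and their chords -/

section Curves

variable {g : ℝ → Rn n}

/-- The components of a continuous periodic curve, as functions on the circle. -/
def componentLift (g : ℝ → Rn n) (hper : Function.Periodic g 1) (hcont : Continuous g)
    (j : Fin n) : C(UnitAddCircle, ℂ) where
  toFun x := (hper.lift x j : ℂ)
  continuous_toFun := continuous_coinduced_dom.2 <| Complex.continuous_ofReal.comp <|
    (EuclideanSpace.proj (𝕜 := ℝ) j).continuous.comp hcont

@[simp]
lemma componentLift_coe (hper : Function.Periodic g 1) (hcont : Continuous g) (j : Fin n) (u : ℝ) :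
    componentLift g hper hcont j u = (g u j : ℂ) := rfl

lemma fourierCoeff_componentLift (hper : Function.Periodic g 1) (hcont : Continuous g) (j : Fin n)
    (k : ℤ) : fourierCoeff (componentLift g hper hcont j) k = fCoef g k j := by
  rw [fourierCoeff_eq_intervalIntegral _ _ 0]
  simp only [zero_add, div_one, one_smul, fCoef, componentLift_coe, fourier_coe_apply, smul_eq_mul]
  refine intervalIntegral.integral_congr fun u _ => ?_
  push_cast
  ring_nf

/-- A closed curve of class `C¹`, parametrized over `ℝ / ℤ`. -/
structure PeriodicC1 (g : ℝ → Rn n) : Prop where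
  periodic : Function.Periodic g 1
  contDiff : ContDiff ℝ 1 g

namespace PeriodicC1

lemma periodic_deriv (hg : PeriodicC1 g) : Function.Periodic (deriv g) 1 := fun u => by
  rw [← deriv_comp_add_const, funext hg.periodic]

lemma continuous_deriv (hg : PeriodicC1 g) : Continuous (deriv g) :=
  hg.contDiff.continuous_deriv le_rfl

/-- The components of the derivative of a closed curve, as functions on the circle. -/
def velocity (hg : PeriodicC1 g) : Fin n → C(UnitAddCircle, ℂ) :=
  componentLift (deriv g) hg.periodic_deriv hg.continuous_deriv

@[simp]
lemma velocity_coe (hg : PeriodicC1 g) (j : Fin n) (u : ℝ) :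
    hg.velocity j u = (deriv g u j : ℂ) := rfl

lemma hasCircleDeriv_velocity (hg : PeriodicC1 g) (j : Fin n) :
    HasCircleDeriv (componentLift g hg.periodic hg.contDiff.continuous j) (hg.velocity j) :=
  fun u => ((EuclideanSpace.proj j : Rn n →L[ℝ] ℝ).hasFDerivAt.comp_hasDerivAt u
    (hg.contDiff.differentiable one_ne_zero u).hasDerivAt).ofReal_comp

lemma segmentMean_velocity (hg : PeriodicC1 g) {w : ℝ} (hw : w ≠ 0) (j : Fin n) (u : ℝ) :
    segmentMean w (hg.velocity j) u = (((g (u + w) - g u) j / w : ℝ) : ℂ) := by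
  have h := (hg.hasCircleDeriv_velocity j).mul_segmentMean w u
  have hw' : (w : ℂ) ≠ 0 := Complex.ofReal_ne_zero.2 hw
  rw [componentLift_coe, componentLift_coe] at h
  rw [← mul_right_inj' hw', h, PiLp.sub_apply]
  push_cast
  field_simp

end PeriodicC1

variable {γ : ℝ → Rn n}

lemma sum_velocity_sq (hγ : PeriodicC1 γ) (harc : ArcLengthParam γ) :
    ∑ j, hγ.velocity j ^ 2 = 1 := by
  refine continuousMap_addCircle_ext fun u => ?_
  have h : ∑ j, deriv γ u j ^ 2 = 1 := by
    rw [← EuclideanSpace.real_norm_sq_eq, harc u, one_pow]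
  simpa [ContinuousMap.sum_apply] using mod_cast h

lemma norm_sub_le_of_arcLength (hγ : PeriodicC1 γ) (harc : ArcLengthParam γ) (u w : ℝ) :
    ‖γ (u + w) - γ u‖ ≤ |w| := by
  simpa using Convex.norm_image_sub_le_of_norm_deriv_le
    (fun x _ => hγ.contDiff.differentiable one_ne_zero x) (fun x _ => (harc x).le)
    convex_univ (mem_univ u) (mem_univ (u + w))

end Curves

section ChordDeficit

/-- The deficit `1 - |γ(u + w) - γ(u)|² / |w|²` of a chord with respect to its segment of
arc-length. -/
def chordDeficit (γ : ℝ → Rn n) (u w : ℝ) : ℝ := 1 - ‖γ (u + w) - γ u‖ ^ 2 / w ^ 2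

variable {γ : ℝ → Rn n} {w : ℝ}

lemma PeriodicC1.meanDeficit_velocity (hγ : PeriodicC1 γ) (hw : w ≠ 0) (u : ℝ) :
    meanDeficit w hγ.velocity u = (chordDeficit γ u w : ℂ) := by
  have h : ∑ j, ((γ (u + w) - γ u) j / w) ^ 2 = ‖γ (u + w) - γ u‖ ^ 2 / w ^ 2 := by
    simp_rw [div_pow, ← Finset.sum_div, EuclideanSpace.real_norm_sq_eq]
  rw [chordDeficit, ← h]
  simp [meanDeficit, ContinuousMap.sum_apply, hγ.segmentMean_velocity hw]

lemma chordDeficit_nonneg (hγ : PeriodicC1 γ) (harc : ArcLengthParam γ) (hw : w ≠ 0) (u : ℝ) :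
    0 ≤ chordDeficit γ u w := by
  rw [chordDeficit, sub_nonneg, div_le_one (by positivity), ← sq_abs w]
  gcongr
  exact norm_sub_le_of_arcLength hγ harc u w

lemma norm_sub_pos_of_perInjective (hinj : PerInjective γ) (hw : w ∈ Icc (-(1 : ℝ) / 2) (1 / 2))
    (hw0 : w ≠ 0) (u : ℝ) : 0 < ‖γ (u + w) - γ u‖ := by
  rw [norm_pos_iff, sub_ne_zero]
  intro h
  obtain ⟨k, hk⟩ := hinj u (u + w) h.symm
  obtain rfl : w = k := add_left_cancel hk
  have hlt : (k : ℝ) < 1 := by linarith [hw.2]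
  have hgt : (-1 : ℝ) < k := by linarith [hw.1]
  norm_cast at hlt hgt hw0
  omega

lemma chordDeficit_lt_one (hinj : PerInjective γ) (hw : w ∈ Icc (-(1 : ℝ) / 2) (1 / 2))
    (hw0 : w ≠ 0) (u : ℝ) : chordDeficit γ u w < 1 :=
  sub_lt_self 1 (div_pos (pow_pos (norm_sub_pos_of_perInjective hinj hw hw0 u) 2) (by positivity))

lemma norm_meanDeficit_velocity_lt_one (hγ : PeriodicC1 γ) (harc : ArcLengthParam γ)
    (hinj : PerInjective γ) (hw : w ∈ Icc (-(1 : ℝ) / 2) (1 / 2)) :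
    ‖meanDeficit w hγ.velocity‖ < 1 := by
  rcases eq_or_ne w 0 with rfl | hw0
  · simp [meanDeficit_zero (sum_velocity_sq hγ harc)]
  · refine (ContinuousMap.norm_lt_iff _ one_pos).2 fun x => ?_
    induction x using QuotientAddGroup.induction_on with | H u => ?_
    change ‖meanDeficit w hγ.velocity (u : UnitAddCircle)‖ < 1
    rw [hγ.meanDeficit_velocity hw0, Complex.norm_of_nonneg (chordDeficit_nonneg hγ harc hw0 u)]
    exact chordDeficit_lt_one hinj hw hw0 u

lemma exists_norm_meanDeficit_velocity_le (hγ : PeriodicC1 γ) (harc : ArcLengthParam γ)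
    (hinj : PerInjective γ) : ∃ r ∈ Ico (0 : ℝ) 1, ∀ w ∈ Icc (-(1 : ℝ) / 2) (1 / 2),
      ‖meanDeficit w hγ.velocity‖ ≤ r := by
  obtain ⟨w₀, hw₀, hmax⟩ := isCompact_Icc.exists_isMaxOn
    (s := Icc (-(1 : ℝ) / 2) (1 / 2)) ⟨0, by norm_num, by norm_num⟩
    (continuous_meanDeficit hγ.velocity).norm.continuousOn
  exact ⟨_, ⟨norm_nonneg _, norm_meanDeficit_velocity_lt_one hγ harc hinj hw₀⟩, fun w hw => hmax hw⟩

end ChordDeficit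

/-! ### The integrand of `R` on slices of constant `w` -/

section Slices

variable {γ h : ℝ → Rn n} {w : ℝ}

lemma Rintegrand_eq_chordDeficit (α : ℝ) (γ h : ℝ → Rn n) {u : ℝ} (hw : w ≠ 0)
    (hξ : chordDeficit γ u w < 1) :
    Rintegrand α γ h u w = |w| ^ (-α) *
      (2 * (⟪deriv γ u, deriv h u⟫ * (1 / (1 - chordDeficit γ u w) ^ (α / 2) - 1)) -
        α * (⟪γ (u + w) - γ u, h (u + w) - h u⟫ / w ^ 2 *
          (1 / (1 - chordDeficit γ u w) ^ ((α + 2) / 2) - 1))) := by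
  set q := 1 - chordDeficit γ u w with hq
  have hq0 : 0 < q := sub_pos.2 hξ
  have hw0 : 0 < |w| := abs_pos.2 hw
  have hnorm : ‖γ (u + w) - γ u‖ = |w| * q ^ (1 / 2 : ℝ) := by
    rw [← Real.sqrt_eq_rpow, ← Real.sqrt_sq_eq_abs, ← Real.sqrt_mul (sq_nonneg w),
      eq_comm, Real.sqrt_eq_iff_mul_self_eq (by positivity) (norm_nonneg _), hq, chordDeficit]
    field_simp
    ring
  have hpow (p : ℝ) : ‖γ (u + w) - γ u‖ ^ p = |w| ^ p * q ^ (p / 2) := by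
    rw [hnorm, Real.mul_rpow hw0.le (by positivity), ← Real.rpow_mul hq0.le, one_div_mul_eq_div]
  have hw2 : |w| ^ (α + 2) = |w| ^ α * w ^ 2 := by
    rw [Real.rpow_add hw0, Real.rpow_two, sq_abs]
  rw [Rintegrand, hpow, hpow, hw2, Real.rpow_neg hw0.le]
  field_simp

/-- The function `u ↦ |w| ^ α R(γ, h)(u, w)`, written through the deficit of the segment means of
`γ'`. -/
def rescaledSlice (α : ℝ) (hγ : PeriodicC1 γ) (hh : PeriodicC1 h) (w : ℝ) :
    C(UnitAddCircle, ℂ) :=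
  (2 : ℂ) • ((∑ j, hh.velocity j * hγ.velocity j) *
      tailSeries (negBinomTail (α / 2)) (meanDeficit w hγ.velocity)) -
    (α : ℂ) • ((∑ j, segmentMean w (hh.velocity j) * segmentMean w (hγ.velocity j)) *
      tailSeries (negBinomTail ((α + 2) / 2)) (meanDeficit w hγ.velocity))

lemma tailSeries_meanDeficit_velocity (hγ : PeriodicC1 γ) (harc : ArcLengthParam γ)
    (hinj : PerInjective γ) (hw : w ∈ Icc (-(1 : ℝ) / 2) (1 / 2)) (hw0 : w ≠ 0) (β u : ℝ) :
    tailSeries (negBinomTail β) (meanDeficit w hγ.velocity) u =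
      (1 / (1 - chordDeficit γ u w) ^ β - 1 : ℝ) := by
  obtain ⟨R, hR, hR1⟩ := exists_between (norm_meanDeficit_velocity_lt_one hγ harc hinj hw)
  rw [tailSeries_continuousMap_apply (summable_norm_negBinomTail_mul_pow β
    ((norm_nonneg _).trans_lt hR) hR1) hR.le, hγ.meanDeficit_velocity hw0]
  exact tailSeries_negBinomTail β (chordDeficit_nonneg hγ harc hw0 u)
    (chordDeficit_lt_one hinj hw hw0 u)

lemma Rintegrand_eq_rescaledSlice (α : ℝ) (hγ : PeriodicC1 γ) (harc : ArcLengthParam γ)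
    (hinj : PerInjective γ) (hh : PeriodicC1 h) (hw : w ∈ Icc (-(1 : ℝ) / 2) (1 / 2))
    (hw0 : w ≠ 0) (u : ℝ) :
    (Rintegrand α γ h u w : ℂ) = ((|w| ^ (-α) : ℝ) : ℂ) * rescaledSlice α hγ hh w u := by
  have hderiv : (∑ j, hh.velocity j * hγ.velocity j) (u : UnitAddCircle) =
      (⟪deriv γ u, deriv h u⟫ : ℂ) := by
    simp [ContinuousMap.sum_apply, PiLp.inner_apply]
  have hchord : (∑ j, segmentMean w (hh.velocity j) * segmentMean w (hγ.velocity j))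
      (u : UnitAddCircle) = (⟪γ (u + w) - γ u, h (u + w) - h u⟫ / w ^ 2 : ℝ) := by
    simp only [ContinuousMap.sum_apply, ContinuousMap.mul_apply, hγ.segmentMean_velocity hw0,
      hh.segmentMean_velocity hw0, PiLp.inner_apply, Finset.sum_div]
    push_cast
    refine Finset.sum_congr rfl fun j _ => ?_
    simp
    ring
  rw [Rintegrand_eq_chordDeficit α γ h hw0 (chordDeficit_lt_one hinj hw hw0 u)]
  simp only [rescaledSlice, ContinuousMap.sub_apply, ContinuousMap.smul_apply,
    ContinuousMap.mul_apply, hderiv, hchord, smul_eq_mul,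
    tailSeries_meanDeficit_velocity hγ harc hinj hw hw0]
  push_cast
  ring

lemma integral_Rintegrand_eq (α : ℝ) (hγ : PeriodicC1 γ) (harc : ArcLengthParam γ)
    (hinj : PerInjective γ) (hh : PeriodicC1 h) (hw : w ∈ Icc (-(1 : ℝ) / 2) (1 / 2))
    (hw0 : w ≠ 0) :
    ((∫ u in Ioc (0 : ℝ) 1, Rintegrand α γ h u w : ℝ) : ℂ) =
      ((|w| ^ (-α) : ℝ) : ℂ) * fourierCoeff (rescaledSlice α hγ hh w) 0 := by
  rw [fourierCoeff_eq_intervalIntegral _ _ 0, zero_add, ← integral_complex_ofReal,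
    intervalIntegral.integral_of_le zero_le_one]
  simp only [Rintegrand_eq_rescaledSlice α hγ harc hinj hh hw hw0, neg_zero, fourier_zero,
    one_smul, div_one, integral_const_mul]

lemma exists_enorm_fourierCoeff_rescaledSlice_le {κ b q τ : ℝ} {F : ℤ → ℝ≥0∞} (α : ℝ)
    (hγ : PeriodicC1 γ) (harc : ArcLengthParam γ) (hinj : PerInjective γ)
    (hκ : 0 ≤ κ) (hb : κ ≤ b) (hq : 0 ≤ q + κ) (hbq : 1 / 2 < b + q) (hτ : 0 ≤ τ) (hτ' : τ ≤ 1)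
    (hFκ : ∑' k, freqWeight κ k * F k ≠ ⊤) (hFb : weightedL2Norm (b + τ) F ≠ ⊤)
    (hF : ∀ j, FourierDominated (hγ.velocity j) F) :
    ∃ C : ℝ≥0∞, C ≠ ⊤ ∧ ∀ (h : ℝ → Rn n) (hh : PeriodicC1 h) (H : ℤ → ℝ≥0∞),
      (∀ j, FourierDominated (hh.velocity j) H) → ∀ w ∈ Icc (-(1 : ℝ) / 2) (1 / 2),
      ‖fourierCoeff (rescaledSlice α hγ hh w) 0‖ₑ ≤
        C * (ENNReal.ofReal (|w| ^ τ) ^ 2 * weightedL2Norm q H) := by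
  obtain ⟨r, ⟨hr, hr1⟩, hrw⟩ := exists_norm_meanDeficit_velocity_le hγ harc hinj
  obtain ⟨R, hrR, hR1⟩ := exists_between hr1
  have hpairing (β : ℝ) := exists_enorm_fourierCoeff_mul_tailSeries_meanDeficit_le hκ hb hq hbq
    hτ hτ' hr hrR (summable_norm_negBinomTail_mul_pow β (hr.trans_lt hrR) hR1) hFκ hFb hF
    (sum_velocity_sq hγ harc)
  obtain ⟨C₁, hC₁, hbound₁⟩ := hpairing (α / 2)
  obtain ⟨C₂, hC₂, hbound₂⟩ := hpairing ((α + 2) / 2)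
  refine ⟨‖(2 : ℂ)‖ₑ * C₁ + ‖(α : ℂ)‖ₑ * C₂, by finiteness, fun h hh H hH w hw => ?_⟩
  rw [← fourierCoeffCLM_apply, rescaledSlice, map_sub, map_smul, map_smul, add_mul, mul_assoc,
    mul_assoc]
  refine enorm_sub_le.trans ?_
  rw [enorm_smul, enorm_smul]
  gcongr
  · exact hbound₁ w _ _ H (hrw w hw) hH hF
  · exact hbound₂ w _ _ H (hrw w hw) (fun j => (hH j).mean w) fun j => (hF j).mean w

lemma exists_norm_rescaledSlice_le (α : ℝ) (hγ : PeriodicC1 γ) (harc : ArcLengthParam γ)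
    (hinj : PerInjective γ) (hh : PeriodicC1 h) :
    ∃ K : ℝ, 0 ≤ K ∧ ∀ w ∈ Icc (-(1 : ℝ) / 2) (1 / 2), ∀ x,
      ‖rescaledSlice α hγ hh w x‖ ≤ K * ‖meanDeficit w hγ.velocity x‖ := by
  obtain ⟨r, ⟨hr, hr1⟩, hrw⟩ := exists_norm_meanDeficit_velocity_le hγ harc hinj
  obtain ⟨R, hrR, hR1⟩ := exists_between hr1
  have hR0 : 0 < R := hr.trans_lt hrR
  have hseries {w : ℝ} (hw : w ∈ Icc (-(1 : ℝ) / 2) (1 / 2)) (β : ℝ) :=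
    norm_tailSeries_continuousMap_apply_le
      (summable_norm_negBinomTail_mul_pow β (hr.trans_lt hrR) hR1) ((hrw w hw).trans hrR.le)
  set S : ℝ → ℝ := fun β => ∑' n, ‖negBinomTail β n‖ * R ^ n
  have hS (β : ℝ) : 0 ≤ S β := tsum_nonneg fun n => by have := hr.trans hrR.le; positivity
  set P : ℝ := ∑ j, ‖hh.velocity j‖ * ‖hγ.velocity j‖
  have hP {y z : Fin n → C(UnitAddCircle, ℂ)} (hy : ∀ j, ‖y j‖ ≤ ‖hh.velocity j‖)
      (hz : ∀ j, ‖z j‖ ≤ ‖hγ.velocity j‖) (x : UnitAddCircle) : ‖(∑ j, y j * z j) x‖ ≤ P :=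
    (ContinuousMap.norm_coe_le_norm _ x).trans <| norm_sum_le_of_le _ fun j _ =>
      (norm_mul_le _ _).trans (mul_le_mul (hy j) (hz j) (norm_nonneg _) (norm_nonneg _))
  refine ⟨2 * (P * S (α / 2)) + |α| * (P * S ((α + 2) / 2)),
    by have := hS (α / 2); have := hS ((α + 2) / 2); positivity, fun w hw x => ?_⟩
  refine (norm_sub_le _ _).trans ?_
  simp only [ContinuousMap.smul_apply, ContinuousMap.mul_apply, norm_smul, norm_mul,
    Complex.norm_ofNat, Complex.norm_real, Real.norm_eq_abs, add_mul, mul_assoc]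
  gcongr
  · exact hP (fun _ => le_rfl) (fun _ => le_rfl) x
  · exact hseries hw _ x
  · exact hP (fun j => norm_segmentMean_le w _) (fun j => norm_segmentMean_le w _) x
  · exact hseries hw _ x

lemma lintegral_enorm_meanDeficit_velocity (hγ : PeriodicC1 γ) (harc : ArcLengthParam γ)
    (hw0 : w ≠ 0) :
    ∫⁻ u in Ioc (0 : ℝ) 1, ‖meanDeficit w hγ.velocity u‖ₑ =
      ‖fourierCoeff (meanDeficit w hγ.velocity) 0‖ₑ := by
  have hcont : Continuous fun u => chordDeficit γ u w := by
    have := hγ.contDiff.continuous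
    unfold chordDeficit
    fun_prop
  have hnonneg (u : ℝ) : 0 ≤ chordDeficit γ u w := chordDeficit_nonneg hγ harc hw0 u
  have hcoeff : fourierCoeff (meanDeficit w hγ.velocity) 0 =
      (∫ u in Ioc (0 : ℝ) 1, chordDeficit γ u w : ℝ) := by
    rw [fourierCoeff_eq_intervalIntegral _ _ 0, zero_add, ← integral_complex_ofReal,
      intervalIntegral.integral_of_le zero_le_one]
    simp only [hγ.meanDeficit_velocity hw0, neg_zero, fourier_zero, one_smul, div_one]
  rw [hcoeff, ← ofReal_norm, Complex.norm_of_nonneg (integral_nonneg hnonneg),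
    ofReal_integral_eq_lintegral_ofReal (hcont.integrableOn_Ioc) (ae_of_all _ hnonneg)]
  refine lintegral_congr fun u => ?_
  rw [hγ.meanDeficit_velocity hw0, ← ofReal_norm, Complex.norm_of_nonneg (hnonneg u)]

lemma ofReal_rpow_neg_mul_ofReal_rpow_sq (hw0 : w ≠ 0) (α τ : ℝ) :
    ENNReal.ofReal (|w| ^ (-α)) * ENNReal.ofReal (|w| ^ τ) ^ 2 =
      ENNReal.ofReal (|w| ^ (2 * τ - α)) := by
  have hw : 0 < |w| := abs_pos.2 hw0
  rw [← ENNReal.ofReal_pow (by positivity), ← ENNReal.ofReal_mul (by positivity),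
    ← Real.rpow_mul_natCast hw.le, ← Real.rpow_add hw]
  congr 2
  push_cast
  ring

lemma enorm_ofReal_rpow (w p : ℝ) : ‖((|w| ^ p : ℝ) : ℂ)‖ₑ = ENNReal.ofReal (|w| ^ p) := by
  rw [← ofReal_norm, Complex.norm_of_nonneg (by positivity)]

lemma exists_lintegral_enorm_Rintegrand_le {τ : ℝ} {F : ℤ → ℝ≥0∞} (α : ℝ)
    (hγ : PeriodicC1 γ) (harc : ArcLengthParam γ) (hinj : PerInjective γ)
    (hτ : 0 ≤ τ) (hτ' : τ ≤ 1) (hsum : ∑' k, F k ≠ ⊤) (hFτ : weightedL2Norm τ F ≠ ⊤)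
    (hF : ∀ j, FourierDominated (hγ.velocity j) F) (hh : PeriodicC1 h) :
    ∃ C : ℝ≥0∞, C ≠ ⊤ ∧ ∀ w ∈ Icc (-(1 : ℝ) / 2) (1 / 2), w ≠ 0 →
      ∫⁻ u in Ioc (0 : ℝ) 1, ‖Rintegrand α γ h u w‖ₑ ≤ C * ENNReal.ofReal (|w| ^ (2 * τ - α)) := by
  obtain ⟨K, hK, hslice⟩ := exists_norm_rescaledSlice_le α hγ harc hinj hh
  set D : ℝ≥0∞ := 2 * n * ENNReal.ofReal (4 * Real.pi) ^ 2 * weightedL2Norm τ F ^ 2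
  refine ⟨ENNReal.ofReal K * D, by finiteness, fun w hw hw0 => ?_⟩
  have hpoint (u : ℝ) : ‖Rintegrand α γ h u w‖ₑ ≤
      ENNReal.ofReal (|w| ^ (-α)) * ENNReal.ofReal K * ‖meanDeficit w hγ.velocity u‖ₑ := by
    have henorm : ‖Rintegrand α γ h u w‖ₑ = ‖(Rintegrand α γ h u w : ℂ)‖ₑ := by
      rw [← ofReal_norm, ← ofReal_norm, Complex.norm_real]
    rw [henorm, Rintegrand_eq_rescaledSlice α hγ harc hinj hh hw hw0, enorm_mul,
      enorm_ofReal_rpow, mul_assoc, ← ofReal_norm, ← ofReal_norm, ← ENNReal.ofReal_mul hK]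
    gcongr
    exact hslice w hw u
  have hmass : ‖fourierCoeff (meanDeficit w hγ.velocity) 0‖ₑ ≤
      D * ENNReal.ofReal (|w| ^ τ) ^ 2 := by
    refine (FourierDominated.deficit_fine hsum hF (sum_velocity_sq hγ harc) hτ hτ' w 0).trans ?_
    rw [Fintype.card_fin]
    calc _ ≤ 2 * n * ENNReal.ofReal (4 * Real.pi * |w| ^ τ) ^ 2 *
          (weightedL2Norm τ F * weightedL2Norm τ F) := by
          beta_reduce
          gcongr
          refine (seqConv_le_weightedL2Norm_mul _ _ 0).trans_eq ?_
          rw [weightedL2Norm_freqWeight_mul, zero_add]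
      _ = D * ENNReal.ofReal (|w| ^ τ) ^ 2 := by
          rw [ENNReal.ofReal_mul (by positivity)]
          ring
  calc ∫⁻ u in Ioc (0 : ℝ) 1, ‖Rintegrand α γ h u w‖ₑ
      ≤ ENNReal.ofReal (|w| ^ (-α)) * ENNReal.ofReal K *
          ∫⁻ u in Ioc (0 : ℝ) 1, ‖meanDeficit w hγ.velocity u‖ₑ := by
        rw [← lintegral_const_mul' _ _ (by finiteness)]
        exact lintegral_mono hpoint
    _ ≤ ENNReal.ofReal (|w| ^ (-α)) * ENNReal.ofReal K * (D * ENNReal.ofReal (|w| ^ τ) ^ 2) := by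
        rw [lintegral_enorm_meanDeficit_velocity hγ harc hw0]
        gcongr
    _ = ENNReal.ofReal K * D * ENNReal.ofReal (|w| ^ (2 * τ - α)) := by
        rw [← ofReal_rpow_neg_mul_ofReal_rpow_sq hw0]
        ring

end Slices

section DoubleIntegral

variable {γ h : ℝ → Rn n}

lemma lintegral_abs_rpow_lt_top {p : ℝ} (hp : -1 < p) :
    ∫⁻ w in Icc (-(1 : ℝ) / 2) (1 / 2), ENNReal.ofReal (|w| ^ p) < ⊤ := by
  refine Integrable.lintegral_lt_top ?_
  have hint := (intervalIntegral.intervalIntegrable_cpow' (r := (p : ℂ)) (a := -(1 : ℝ) / 2)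
    (b := 1 / 2) (by simpa using hp)).norm
  simp only [Complex.norm_cpow_real, Complex.norm_real, Real.norm_eq_abs] at hint
  rwa [← IntegrableOn, integrableOn_Icc_iff_integrableOn_Ioc,
    ← intervalIntegrable_iff_integrableOn_Ioc_of_le (by norm_num)]

lemma measurable_Rintegrand (α : ℝ) (hγ : PeriodicC1 γ) (hh : PeriodicC1 h) :
    Measurable fun p : ℝ × ℝ => Rintegrand α γ h p.1 p.2 := by
  have hγ₀ := hγ.contDiff.continuous
  have hh₀ := hh.contDiff.continuous
  have hderiv : Continuous fun p : ℝ × ℝ => ⟪deriv γ p.1, deriv h p.1⟫ := by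
    have := hγ.continuous_deriv
    have := hh.continuous_deriv
    fun_prop
  have hdiff : Continuous fun p : ℝ × ℝ =>
      ⟪γ (p.1 + p.2) - γ p.1, h (p.1 + p.2) - h p.1⟫ := by fun_prop
  have hdist : Continuous fun p : ℝ × ℝ => ‖γ (p.1 + p.2) - γ p.1‖ := by fun_prop
  have hinv (β : ℝ) : Measurable fun p : ℝ × ℝ =>
      1 / ‖γ (p.1 + p.2) - γ p.1‖ ^ β - 1 / |p.2| ^ β :=
    ((hdist.measurable.pow_const β).const_div 1).sub (by fun_prop)
  exact ((hderiv.measurable.const_mul 2).mul (hinv α)).sub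
    ((hdiff.measurable.const_mul α).mul (hinv (α + 2)))

lemma ae_mem_Icc_and_ne_zero : ∀ᵐ w : ℝ ∂volume.restrict (Icc (-(1 : ℝ) / 2) (1 / 2)),
    w ∈ Icc (-(1 : ℝ) / 2) (1 / 2) ∧ w ≠ 0 :=
  (ae_restrict_mem measurableSet_Icc).and (ae_restrict_of_ae (Measure.ae_ne volume 0))

lemma integrableOn_Rintegrand {α τ : ℝ} {F : ℤ → ℝ≥0∞}
    (hγ : PeriodicC1 γ) (harc : ArcLengthParam γ) (hinj : PerInjective γ)
    (hτ : 0 ≤ τ) (hτ' : τ ≤ 1) (hατ : -1 < 2 * τ - α) (hsum : ∑' k, F k ≠ ⊤)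
    (hFτ : weightedL2Norm τ F ≠ ⊤) (hF : ∀ j, FourierDominated (hγ.velocity j) F)
    (hh : PeriodicC1 h) :
    IntegrableOn (fun p : ℝ × ℝ => Rintegrand α γ h p.1 p.2)
      (Ioc 0 1 ×ˢ Icc (-(1 : ℝ) / 2) (1 / 2)) := by
  obtain ⟨C, hC, hslice⟩ :=
    exists_lintegral_enorm_Rintegrand_le α hγ harc hinj hτ hτ' hsum hFτ hF hh
  have hmeas := measurable_Rintegrand α hγ hh
  refine ⟨hmeas.aestronglyMeasurable, ?_⟩
  rw [hasFiniteIntegral_iff_enorm, Measure.volume_eq_prod, ← Measure.prod_restrict,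
    lintegral_prod_symm _ hmeas.enorm.aemeasurable]
  calc ∫⁻ w in Icc (-(1 : ℝ) / 2) (1 / 2), ∫⁻ u in Ioc (0 : ℝ) 1, ‖Rintegrand α γ h u w‖ₑ
      ≤ ∫⁻ w in Icc (-(1 : ℝ) / 2) (1 / 2), C * ENNReal.ofReal (|w| ^ (2 * τ - α)) :=
        lintegral_mono_ae (ae_mem_Icc_and_ne_zero.mono fun w hw => hslice w hw.1 hw.2)
    _ = C * ∫⁻ w in Icc (-(1 : ℝ) / 2) (1 / 2), ENNReal.ofReal (|w| ^ (2 * τ - α)) :=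
        lintegral_const_mul' _ _ hC
    _ < ⊤ := ENNReal.mul_lt_top hC.lt_top (lintegral_abs_rpow_lt_top hατ)

lemma enorm_Rval_le {α : ℝ} (hint : IntegrableOn (fun p : ℝ × ℝ => Rintegrand α γ h p.1 p.2)
      (Ioc 0 1 ×ˢ Icc (-(1 : ℝ) / 2) (1 / 2))) :
    ‖Rval α γ h‖ₑ ≤ ∫⁻ w in Icc (-(1 : ℝ) / 2) (1 / 2),
      ‖∫ u in Ioc (0 : ℝ) 1, Rintegrand α γ h u w‖ₑ := by
  rw [IntegrableOn, Measure.volume_eq_prod, ← Measure.prod_restrict] at hint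
  rw [Rval, Measure.volume_eq_prod, ← Measure.prod_restrict, integral_prod_symm _ hint]
  exact enorm_integral_le_lintegral_enorm _

lemma exists_enorm_Rval_le {α κ b q τ : ℝ} {F : ℤ → ℝ≥0∞}
    (hγ : PeriodicC1 γ) (harc : ArcLengthParam γ) (hinj : PerInjective γ)
    (hκ : 0 ≤ κ) (hb : κ ≤ b) (hq : 0 ≤ q + κ) (hbq : 1 / 2 < b + q) (hτ : 0 ≤ τ) (hτ' : τ ≤ 1)
    (hατ : -1 < 2 * τ - α)
    (hFκ : ∑' k, freqWeight κ k * F k ≠ ⊤) (hFb : weightedL2Norm (b + τ) F ≠ ⊤)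
    (hF : ∀ j, FourierDominated (hγ.velocity j) F) :
    ∃ C : ℝ≥0∞, C ≠ ⊤ ∧ ∀ (h : ℝ → Rn n) (hh : PeriodicC1 h) (H : ℤ → ℝ≥0∞),
      (∀ j, FourierDominated (hh.velocity j) H) →
      IntegrableOn (fun p : ℝ × ℝ => Rintegrand α γ h p.1 p.2)
        (Ioc 0 1 ×ˢ Icc (-(1 : ℝ) / 2) (1 / 2)) ∧
      ‖Rval α γ h‖ₑ ≤ C * weightedL2Norm q H := by
  obtain ⟨C, hC, hslice⟩ := exists_enorm_fourierCoeff_rescaledSlice_le α hγ harc hinj hκ hb hq hbq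
    hτ hτ' hFκ hFb hF
  have hsum : ∑' k, F k ≠ ⊤ := ne_top_of_le_ne_top hFκ <|
    ENNReal.tsum_le_tsum fun k => le_mul_of_one_le_left zero_le (one_le_freqWeight hκ k)
  have hFτ : weightedL2Norm τ F ≠ ⊤ :=
    ne_top_of_le_ne_top hFb (weightedL2Norm_mono_left (by linarith) F)
  refine ⟨C * ∫⁻ w in Icc (-(1 : ℝ) / 2) (1 / 2), ENNReal.ofReal (|w| ^ (2 * τ - α)),
    ENNReal.mul_ne_top hC (lintegral_abs_rpow_lt_top hατ).ne, fun h hh H hH => ?_⟩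
  have hint := integrableOn_Rintegrand hγ harc hinj hτ hτ' hατ hsum hFτ hF hh
  have hbound (w : ℝ) (hw : w ∈ Icc (-(1 : ℝ) / 2) (1 / 2)) (hw0 : w ≠ 0) :
      ‖∫ u in Ioc (0 : ℝ) 1, Rintegrand α γ h u w‖ₑ ≤
        ENNReal.ofReal (|w| ^ (2 * τ - α)) * (C * weightedL2Norm q H) := by
    rw [← ofReal_norm, ← Complex.norm_real, ofReal_norm,
      integral_Rintegrand_eq α hγ harc hinj hh hw hw0, enorm_mul, enorm_ofReal_rpow,
      ← ofReal_rpow_neg_mul_ofReal_rpow_sq hw0, mul_assoc, mul_left_comm _ C]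
    gcongr
    exact hslice h hh H hH w hw
  refine ⟨hint, (enorm_Rval_le hint).trans ?_⟩
  calc ∫⁻ w in Icc (-(1 : ℝ) / 2) (1 / 2), ‖∫ u in Ioc (0 : ℝ) 1, Rintegrand α γ h u w‖ₑ
      ≤ ∫⁻ w in Icc (-(1 : ℝ) / 2) (1 / 2),
          ENNReal.ofReal (|w| ^ (2 * τ - α)) * (C * weightedL2Norm q H) :=
        lintegral_mono_ae (ae_mem_Icc_and_ne_zero.mono fun w hw => hbound w hw.1 hw.2)
    _ = _ := by
        rw [lintegral_mul_const _ (by fun_prop)]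
        ring

end DoubleIntegral

/-! ### Sobolev regularity and Fourier coefficients -/

section FourierSeries

variable {T : ℝ}

lemma HasCircleDeriv.contDiff {f f' : C(AddCircle T, ℂ)} (h : HasCircleDeriv f f') :
    ContDiff ℝ 1 fun u : ℝ => f u := by
  rw [contDiff_one_iff_deriv, funext fun u => (h u).deriv]
  exact ⟨fun u => (h u).differentiableAt, f'.continuous.comp (AddCircle.continuous_mk' T)⟩

variable [Fact (0 < T)]

lemma summable_of_summable_abs_mul {E : Type*} [NormedAddCommGroup E] [CompleteSpace E] {c : ℤ → E}
    (h : Summable fun k : ℤ => |(k : ℝ)| * ‖c k‖) : Summable c := by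
  refine Summable.of_norm_bounded_eventually h ?_
  filter_upwards [(finite_singleton (0 : ℤ)).compl_mem_cofinite] with k hk
  exact le_mul_of_one_le_left (norm_nonneg _) (by exact_mod_cast Int.one_le_abs hk)

lemma exists_hasCircleDeriv {f : C(AddCircle T, ℂ)}
    (hf : Summable fun k : ℤ => |(k : ℝ)| * ‖fourierCoeff f k‖) :
    ∃ f' : C(AddCircle T, ℂ), HasCircleDeriv f f' := by
  set c : ℤ → ℂ := fun k => fourierCoeff f k * (2 * Real.pi * Complex.I * k / T)
  have hc : Summable fun k => ‖c k‖ := by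
    refine (hf.mul_left (2 * Real.pi / |T|)).congr fun k => ?_
    simp only [c, norm_mul, norm_div, Complex.norm_real, Complex.norm_intCast, Complex.norm_I,
      Complex.norm_ofNat, Real.norm_eq_abs, abs_of_pos Real.pi_pos]
    ring
  have hseries (u : ℝ) : HasSum (fun k => fourierCoeff f k * fourier k (u : AddCircle T)) (f u) :=
    has_pointwise_sum_fourier_series_of_summable (summable_of_summable_abs_mul hf) _
  have hf' : Summable fun k => c k • (fourier k : C(AddCircle T, ℂ)) :=
    .of_norm (by simpa only [norm_smul, fourier_norm, mul_one] using hc)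
  have hf'u (u : ℝ) : (∑' k, c k • (fourier k : C(AddCircle T, ℂ))) (u : AddCircle T) =
      ∑' k, c k * fourier k (u : AddCircle T) :=
    (hf'.hasSum.mapL (ContinuousMap.evalCLM ℂ (u : AddCircle T))).tsum_eq.symm
  refine ⟨∑' k, c k • fourier k, fun u => ?_⟩
  rw [hf'u, ← funext fun v => (hseries v).tsum_eq]
  refine hasDerivAt_tsum (g := fun k (v : ℝ) => fourierCoeff f k * fourier k (v : AddCircle T))
    (g' := fun k (v : ℝ) => c k * fourier k (v : AddCircle T)) (y₀ := 0) hc (fun k v => ?_)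
    (fun k v => ?_) (hseries 0).summable u
  · rw [mul_assoc]
    exact (hasDerivAt_fourier T k v).const_mul (fourierCoeff f k)
  · rw [norm_mul, fourier_apply, Circle.norm_coe, mul_one]

end FourierSeries

/-- A common majorant of the Fourier coefficients of the components of `g'`, see
`fourierDominated_velocity`. -/
def derivMajorant (g : ℝ → Rn n) (k : ℤ) : ℝ≥0∞ :=
  ENNReal.ofReal (2 * Real.pi * (|(k : ℝ)| * √(∑ j, ‖fCoef g k j‖ ^ 2)))

section DerivMajorant

variable {g : ℝ → Rn n}

lemma norm_fCoef_le (g : ℝ → Rn n) (k : ℤ) (j : Fin n) :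
    ‖fCoef g k j‖ ≤ √(∑ j, ‖fCoef g k j‖ ^ 2) :=
  Real.le_sqrt_of_sq_le <| Finset.single_le_sum (f := fun j => ‖fCoef g k j‖ ^ 2)
    (fun _ _ => sq_nonneg _) (Finset.mem_univ j)

lemma PeriodicC1.norm_fourierCoeff_velocity (hg : PeriodicC1 g) (j : Fin n) (k : ℤ) :
    ‖fourierCoeff (hg.velocity j) k‖ = 2 * Real.pi * (|(k : ℝ)| * ‖fCoef g k j‖) := by
  rw [(hg.hasCircleDeriv_velocity j).fourierCoeff_eq, fourierCoeff_componentLift]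
  simp [abs_of_pos Real.pi_pos, mul_assoc]

lemma PeriodicC1.fourierDominated_velocity (hg : PeriodicC1 g) (j : Fin n) :
    FourierDominated (hg.velocity j) (derivMajorant g) := fun k => by
  rw [← ofReal_norm, hg.norm_fourierCoeff_velocity, derivMajorant]
  gcongr
  exact norm_fCoef_le g k j

lemma one_add_abs_rpow_le (c x : ℝ) : (1 + |x|) ^ (2 * c) ≤ 2 ^ |c| * (1 + x ^ 2) ^ c := by
  rw [Real.rpow_mul (by positivity), Real.rpow_two]
  rcases le_total 0 c with hc | hc
  · rw [abs_of_nonneg hc, ← Real.mul_rpow (by norm_num) (by positivity)]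
    gcongr
    nlinarith [sq_nonneg (1 - |x|), sq_abs x]
  · calc ((1 + |x|) ^ 2) ^ c ≤ (1 + x ^ 2) ^ c :=
          Real.rpow_le_rpow_of_nonpos (by positivity) (by nlinarith [abs_nonneg x, sq_abs x]) hc
      _ ≤ 2 ^ |c| * (1 + x ^ 2) ^ c :=
          le_mul_of_one_le_left (by positivity) (Real.one_le_rpow one_le_two (abs_nonneg c))

lemma freqWeight_mul_derivMajorant_sq_le (c : ℝ) (g : ℝ → Rn n) (k : ℤ) :
    (freqWeight c k * derivMajorant g k) ^ 2 ≤ ENNReal.ofReal ((2 * Real.pi) ^ 2 * 2 ^ |c|) *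
      ENNReal.ofReal ((1 + (k : ℝ) ^ 2) ^ (c + 1) * ∑ j, ‖fCoef g k j‖ ^ 2) := by
  rw [freqWeight_eq_ofReal, derivMajorant, ← ENNReal.ofReal_mul (by positivity),
    ← ENNReal.ofReal_pow (by positivity), ← ENNReal.ofReal_mul (by positivity)]
  refine ENNReal.ofReal_le_ofReal ?_
  set S := ∑ j, ‖fCoef g k j‖ ^ 2
  have hS : √S ^ 2 = S := Real.sq_sqrt (by positivity)
  calc ((1 + |(k : ℝ)|) ^ c * (2 * Real.pi * (|(k : ℝ)| * √S))) ^ 2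
      = (2 * Real.pi) ^ 2 * ((1 + |(k : ℝ)|) ^ (2 * c) * (k : ℝ) ^ 2 * S) := by
        rw [mul_comm 2 c, Real.rpow_mul (by positivity), Real.rpow_two, ← sq_abs (k : ℝ)]
        nth_rw 2 [← hS]
        ring
    _ ≤ (2 * Real.pi) ^ 2 * (2 ^ |c| * (1 + (k : ℝ) ^ 2) ^ c * (1 + (k : ℝ) ^ 2) * S) := by
        gcongr
        · exact one_add_abs_rpow_le c k
        · linarith
    _ = (2 * Real.pi) ^ 2 * 2 ^ |c| * ((1 + (k : ℝ) ^ 2) ^ (c + 1) * S) := by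
        rw [Real.rpow_add_one (by positivity)]
        ring

lemma MemHF.weightedL2Norm_derivMajorant_le {c : ℝ} (hg : MemHF (c + 1) g) :
    weightedL2Norm c (derivMajorant g) ≤
      ENNReal.ofReal (2 * Real.pi * √(2 ^ |c|) * √(fNormSq (c + 1) g)) := by
  have hnorm : 0 ≤ fNormSq (c + 1) g := tsum_nonneg fun k => by positivity
  rw [← ENNReal.pow_le_pow_left_iff two_ne_zero, weightedL2Norm_sq]
  calc ∑' k, (freqWeight c k * derivMajorant g k) ^ 2
      ≤ ENNReal.ofReal ((2 * Real.pi) ^ 2 * 2 ^ |c|) * ENNReal.ofReal (fNormSq (c + 1) g) := by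
        rw [fNormSq, ENNReal.ofReal_tsum_of_nonneg (fun k => by positivity) hg.2.2,
          ← ENNReal.tsum_mul_left]
        exact ENNReal.tsum_le_tsum (freqWeight_mul_derivMajorant_sq_le c g)
    _ = ENNReal.ofReal (2 * Real.pi * √(2 ^ |c|) * √(fNormSq (c + 1) g)) ^ 2 := by
        rw [← ENNReal.ofReal_mul (by positivity), ← ENNReal.ofReal_pow (by positivity),
          mul_pow _ √(fNormSq (c + 1) g), mul_pow _ √(2 ^ |c|), Real.sq_sqrt hnorm,
          Real.sq_sqrt (by positivity)]

lemma MemHF.weightedL2Norm_derivMajorant_ne_top {c t : ℝ} (hg : MemHF t g) (hc : c + 1 = t) :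
    weightedL2Norm c (derivMajorant g) ≠ ⊤ := by
  subst hc
  exact ne_top_of_le_ne_top ENNReal.ofReal_ne_top hg.weightedL2Norm_derivMajorant_le

lemma MemHF.contDiff {t : ℝ} (ht : 3 / 2 < t) (hg : MemHF t g) : ContDiff ℝ 1 g := by
  have hmajorant : Summable fun k => (derivMajorant g k).toReal := by
    refine ENNReal.summable_toReal ?_
    simpa only [freqWeight_apply_zero, freqWeight_zero, one_mul] using
      tsum_freqWeight_mul_ne_top (κ := 0) (by linarith)
        (hg.weightedL2Norm_derivMajorant_ne_top (sub_add_cancel t 1))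
  have hcoeff (j : Fin n) :
      Summable fun k : ℤ => |(k : ℝ)| * ‖fourierCoeff (componentLift g hg.1 hg.2.1 j) k‖ := by
    refine .of_nonneg_of_le (fun k => by positivity) (fun k => ?_) hmajorant
    rw [derivMajorant, ENNReal.toReal_ofReal (by positivity), fourierCoeff_componentLift]
    calc |(k : ℝ)| * ‖fCoef g k j‖ ≤ |(k : ℝ)| * √(∑ j, ‖fCoef g k j‖ ^ 2) := by
          gcongr
          exact norm_fCoef_le g k j
      _ ≤ 2 * Real.pi * (|(k : ℝ)| * √(∑ j, ‖fCoef g k j‖ ^ 2)) :=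
          le_mul_of_one_le_left (by positivity) (by linarith [Real.pi_gt_three])
  refine contDiff_euclidean.2 fun j => ?_
  obtain ⟨f', hf'⟩ := exists_hasCircleDeriv (hcoeff j)
  exact Complex.reCLM.contDiff.comp hf'.contDiff

end DerivMajorant

/-! ### The Gagliardo seminorm and Fourier coefficients -/

lemma tsum_enorm_fourierCoeff_sq {T : ℝ} [Fact (0 < T)] (f : C(AddCircle T, ℂ)) :
    ∑' k, ‖fourierCoeff f k‖ₑ ^ 2 = ∫⁻ x, ‖f x‖ₑ ^ 2 ∂AddCircle.haarAddCircle := by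
  have henorm (z : ℂ) : ‖z‖ₑ ^ 2 = ENNReal.ofReal (‖z‖ ^ 2) := by
    rw [ENNReal.ofReal_pow (norm_nonneg z), ofReal_norm]
  have hparseval := hasSum_sq_fourierCoeff (f.toLp (E := ℂ) 2 AddCircle.haarAddCircle ℂ)
  have hcongr := integral_congr_ae ((f.coeFn_toLp (p := 2) (𝕜 := ℂ) AddCircle.haarAddCircle).mono
    fun x hx => congrArg (fun z => ‖z‖ ^ 2) hx)
  have hint : Integrable (fun x => ‖f x‖ ^ 2) AddCircle.haarAddCircle :=
    (by fun_prop : Continuous fun x => ‖f x‖ ^ 2).integrable_of_hasCompactSupport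
      (.of_compactSpace _)
  simp_rw [fourierCoeff_toLp] at hparseval
  simp_rw [henorm]
  rw [← ENNReal.ofReal_tsum_of_nonneg (fun k => sq_nonneg _) hparseval.summable,
    hparseval.tsum_eq, hcongr,
    ofReal_integral_eq_lintegral_ofReal hint (ae_of_all _ fun x => sq_nonneg _)]

lemma tsum_enorm_fourierCoeff_sq_eq_setLIntegral (f : C(UnitAddCircle, ℂ)) :
    ∑' k, ‖fourierCoeff f k‖ₑ ^ 2 = ∫⁻ u in Ioc (0 : ℝ) 1, ‖f u‖ₑ ^ 2 := by
  have hvolume : (volume : Measure UnitAddCircle) = AddCircle.haarAddCircle := by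
    simp [AddCircle.volume_eq_smul_haarAddCircle]
  have hpreimage := UnitAddCircle.lintegral_preimage 0 fun x => ‖f x‖ₑ ^ 2
  rw [zero_add, hvolume] at hpreimage
  rw [tsum_enorm_fourierCoeff_sq, hpreimage]

lemma one_le_norm_one_sub_fourier {k : ℤ} {w : ℝ} (h₁ : 1 / 4 ≤ |(k : ℝ) * w|)
    (h₂ : |(k : ℝ) * w| ≤ 3 / 4) : 1 ≤ ‖1 - fourier k (w : UnitAddCircle)‖ := by
  have hre : (fourier k (w : UnitAddCircle)).re = Real.cos (2 * Real.pi * |(k : ℝ) * w|) := by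
    rw [fourier_coe_apply, show (2 * Real.pi * Complex.I * k * w / (1 : ℝ) : ℂ) =
      ((2 * Real.pi * (k * w) : ℝ) : ℂ) * Complex.I by push_cast; ring,
      Complex.exp_ofReal_mul_I_re, ← Real.cos_abs, abs_mul, abs_of_pos Real.two_pi_pos]
  have hcos : Real.cos (2 * Real.pi * |(k : ℝ) * w|) ≤ 0 :=
    Real.cos_nonpos_of_pi_div_two_le_of_le (by nlinarith [Real.pi_pos])
      (by nlinarith [Real.pi_pos])
  calc 1 ≤ (1 - fourier k (w : UnitAddCircle)).re := by
        rw [Complex.sub_re, hre, Complex.one_re]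
        linarith
    _ ≤ ‖1 - fourier k (w : UnitAddCircle)‖ := Complex.re_le_norm _

lemma two_mul_abs_rpow_le_enorm_one_sub_fourier_sq_mul {p : ℝ} (hp : 0 ≤ p) {k : ℤ} (hk : k ≠ 0)
    {w : ℝ} (hw : w ∈ Ioo (1 / (4 * |(k : ℝ)|)) (1 / (2 * |(k : ℝ)|))) :
    ENNReal.ofReal ((2 * |(k : ℝ)|) ^ p) ≤
      ‖1 - fourier k (w : UnitAddCircle)‖ₑ ^ 2 * ENNReal.ofReal (1 / |w| ^ p) := by
  have hw₀ : 0 < w := lt_trans (by positivity) hw.1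
  have hosc : 1 ≤ ‖1 - fourier k (w : UnitAddCircle)‖ₑ := by
    rw [← ofReal_norm, ENNReal.one_le_ofReal]
    have h₁ := (div_lt_iff₀ (by positivity)).1 hw.1
    have h₂ := (lt_div_iff₀ (by positivity)).1 hw.2
    apply one_le_norm_one_sub_fourier <;> rw [abs_mul, abs_of_pos hw₀] <;> linarith
  have hkernel : (2 * |(k : ℝ)|) ^ p ≤ 1 / |w| ^ p := by
    rw [abs_of_pos hw₀, one_div, ← Real.inv_rpow hw₀.le, ← one_div]
    gcongr
    rw [le_div_comm₀ (by positivity) hw₀]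
    exact hw.2.le
  rw [← one_mul (ENNReal.ofReal _)]
  exact mul_le_mul' (one_le_pow₀ hosc) (ENNReal.ofReal_le_ofReal hkernel)

lemma abs_rpow_le_setLIntegral_norm_one_sub_fourier {σ : ℝ} (hσ : 0 < σ) (k : ℤ) :
    ENNReal.ofReal (|(k : ℝ)| ^ (2 * σ) / 2) ≤ ∫⁻ w in Ioo (-(1 : ℝ) / 2) (1 / 2),
      ‖1 - fourier k (w : UnitAddCircle)‖ₑ ^ 2 * ENNReal.ofReal (1 / |w| ^ (1 + 2 * σ)) := by
  rcases eq_or_ne k 0 with rfl | hk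
  · simp [Real.zero_rpow (mul_pos two_pos hσ).ne']
  have hk₁ : 1 ≤ |(k : ℝ)| := by exact_mod_cast Int.one_le_abs hk
  set J := Ioo (1 / (4 * |(k : ℝ)|)) (1 / (2 * |(k : ℝ)|))
  have hJ : J ⊆ Ioo (-(1 : ℝ) / 2) (1 / 2) := by
    refine Ioo_subset_Ioo (by linarith [show 0 ≤ 1 / (4 * |(k : ℝ)|) by positivity]) ?_
    gcongr
    linarith
  have hlength : |(k : ℝ)| ^ (2 * σ) / 2 ≤
      (2 * |(k : ℝ)|) ^ (1 + 2 * σ) * (1 / (2 * |(k : ℝ)|) - 1 / (4 * |(k : ℝ)|)) :=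
    calc |(k : ℝ)| ^ (2 * σ) / 2 ≤ (2 * |(k : ℝ)|) ^ (2 * σ) / 2 := by
          gcongr
          linarith
      _ = _ := by
          rw [Real.rpow_one_add' (by positivity) (by linarith)]
          field_simp
          norm_num
  calc ENNReal.ofReal (|(k : ℝ)| ^ (2 * σ) / 2)
      ≤ ENNReal.ofReal ((2 * |(k : ℝ)|) ^ (1 + 2 * σ)) * volume J := by
        rw [Real.volume_Ioo, ← ENNReal.ofReal_mul (by positivity)]
        exact ENNReal.ofReal_le_ofReal hlength
    _ = ∫⁻ w in J, ENNReal.ofReal ((2 * |(k : ℝ)|) ^ (1 + 2 * σ)) := (setLIntegral_const _ _).symm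
    _ ≤ ∫⁻ w in J, ‖1 - fourier k (w : UnitAddCircle)‖ₑ ^ 2 *
          ENNReal.ofReal (1 / |w| ^ (1 + 2 * σ)) :=
        setLIntegral_mono' measurableSet_Ioo fun w hw =>
          two_mul_abs_rpow_le_enorm_one_sub_fourier_sq_mul (by linarith) hk hw
    _ ≤ _ := lintegral_mono_set hJ

lemma setLIntegral_sub_rightTranslate_sq_div (f : C(UnitAddCircle, ℂ)) (p w : ℝ) :
    ∫⁻ u in Ioc (0 : ℝ) 1, ENNReal.ofReal (‖f ((u + w : ℝ) : UnitAddCircle) - f u‖ ^ 2 / |w| ^ p) =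
      ∑' k : ℤ, ‖1 - fourier k (w : UnitAddCircle)‖ₑ ^ 2 * ENNReal.ofReal (1 / |w| ^ p) *
        ‖fourierCoeff f k‖ₑ ^ 2 := by
  have hparseval := tsum_enorm_fourierCoeff_sq_eq_setLIntegral (f - rightTranslate w f)
  simp_rw [fourierCoeff_sub_rightTranslate, enorm_mul, mul_pow] at hparseval
  have hsplit (u : ℝ) :
      ENNReal.ofReal (‖f ((u + w : ℝ) : UnitAddCircle) - f u‖ ^ 2 / |w| ^ p) =
        ENNReal.ofReal (1 / |w| ^ p) * ‖(f - rightTranslate w f) u‖ₑ ^ 2 := by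
    rw [ContinuousMap.sub_apply, rightTranslate_apply, ← AddCircle.coe_add, ← ofReal_norm,
      norm_sub_rev, ← ENNReal.ofReal_pow (norm_nonneg _), ← ENNReal.ofReal_mul (by positivity),
      one_div_mul_eq_div]
  simp_rw [hsplit]
  rw [lintegral_const_mul' _ _ ENNReal.ofReal_ne_top, ← hparseval, ← ENNReal.tsum_mul_left]
  exact tsum_congr fun k => by ring

lemma tsum_abs_rpow_mul_fourierCoeff_sq_le {σ : ℝ} (hσ : 0 < σ) (f : C(UnitAddCircle, ℂ)) :
    ∑' k : ℤ, ENNReal.ofReal (|(k : ℝ)| ^ (2 * σ) / 2) * ‖fourierCoeff f k‖ₑ ^ 2 ≤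
      ∫⁻ u in Ioc (0 : ℝ) 1, ∫⁻ w in Ioo (-(1 : ℝ) / 2) (1 / 2),
        ENNReal.ofReal (‖f ((u + w : ℝ) : UnitAddCircle) - f u‖ ^ 2 / |w| ^ (1 + 2 * σ)) := by
  have hmeas : Measurable fun p : ℝ × ℝ => ENNReal.ofReal
      (‖f ((p.1 + p.2 : ℝ) : UnitAddCircle) - f p.1‖ ^ 2 / |p.2| ^ (1 + 2 * σ)) :=
    ((by fun_prop : Continuous fun p : ℝ × ℝ =>
      ‖f ((p.1 + p.2 : ℝ) : UnitAddCircle) - f p.1‖ ^ 2).measurable.div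
        (by fun_prop)).ennreal_ofReal
  have hmeas' (k : ℤ) : Measurable fun w : ℝ =>
      ‖1 - fourier k (w : UnitAddCircle)‖ₑ ^ 2 * ENNReal.ofReal (1 / |w| ^ (1 + 2 * σ)) :=
    ((by fun_prop : Continuous fun w : ℝ =>
      1 - fourier k (w : UnitAddCircle)).measurable.enorm.pow_const 2).mul (by fun_prop)
  rw [lintegral_lintegral_swap hmeas.aemeasurable]
  simp_rw [setLIntegral_sub_rightTranslate_sq_div]
  rw [lintegral_tsum fun k => ((hmeas' k).mul_const _).aemeasurable]
  refine ENNReal.tsum_le_tsum fun k => ?_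
  rw [lintegral_mul_const _ (hmeas' k)]
  gcongr
  exact abs_rpow_le_setLIntegral_norm_one_sub_fourier hσ k

lemma MemHF.mono {s t : ℝ} (hst : s ≤ t) {g : ℝ → Rn n} (hg : MemHF t g) : MemHF s g := by
  refine ⟨hg.1, hg.2.1, .of_nonneg_of_le (fun k => by positivity) (fun k => ?_) hg.2.2⟩
  gcongr
  nlinarith [sq_nonneg (k : ℝ)]

lemma MemH1.tsum_abs_rpow_mul_velocity_ne_top {σ : ℝ} (hσ : 0 < σ) {g : ℝ → Rn n}
    (hg : MemH1 σ g) (hg' : PeriodicC1 g) (j : Fin n) :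
    ∑' k : ℤ, ENNReal.ofReal (|(k : ℝ)| ^ (2 * σ) / 2) *
      ‖fourierCoeff (hg'.velocity j) k‖ₑ ^ 2 ≠ ⊤ := by
  refine ne_top_of_le_ne_top hg.2.2.ne ((tsum_abs_rpow_mul_fourierCoeff_sq_le hσ _).trans ?_)
  unfold gagliardoSq
  refine lintegral_mono fun u => lintegral_mono fun w => ENNReal.ofReal_le_ofReal ?_
  rw [hg'.velocity_coe, hg'.velocity_coe]
  gcongr
  rw [← Complex.ofReal_sub, Complex.norm_real, ← PiLp.sub_apply]
  exact PiLp.norm_apply_le _ j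

lemma MemH1.memHF {σ : ℝ} (hσ : 0 < σ) {g : ℝ → Rn n} (hg : MemH1 σ g) : MemHF (1 + σ) g := by
  have hg' : PeriodicC1 g := ⟨hg.1, hg.2.1⟩
  have hcomponent (j : Fin n) :
      Summable fun k : ℤ => |(k : ℝ)| ^ (2 * (1 + σ)) * ‖fCoef g k j‖ ^ 2 := by
    refine ((ENNReal.summable_toReal
      (hg.tsum_abs_rpow_mul_velocity_ne_top hσ hg' j)).mul_left (1 / (2 * Real.pi ^ 2))).congr
      fun k => ?_
    rw [ENNReal.toReal_mul, ENNReal.toReal_ofReal (by positivity), ENNReal.toReal_pow,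
      toReal_enorm, hg'.norm_fourierCoeff_velocity, mul_add, mul_one,
      Real.rpow_add' (abs_nonneg _) (by linarith), Real.rpow_two]
    field_simp
  refine ⟨hg.1, hg'.contDiff.continuous, Summable.of_norm_bounded_eventually
    ((summable_sum (s := Finset.univ) fun j _ => hcomponent j).mul_left (2 ^ (1 + σ))) ?_⟩
  filter_upwards [(finite_singleton (0 : ℤ)).compl_mem_cofinite] with k hk
  have hk₁ : (1 : ℝ) ≤ (k : ℝ) ^ 2 := by
    rw [← sq_abs]
    exact one_le_pow₀ (by exact_mod_cast Int.one_le_abs hk)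
  rw [Real.norm_of_nonneg (by positivity), ← Finset.mul_sum, ← mul_assoc]
  gcongr
  calc (1 + (k : ℝ) ^ 2) ^ (1 + σ) ≤ (2 * (k : ℝ) ^ 2) ^ (1 + σ) := by
        gcongr
        linarith
    _ = 2 ^ (1 + σ) * |(k : ℝ)| ^ (2 * (1 + σ)) := by
        rw [Real.mul_rpow two_pos.le (by positivity), Real.rpow_mul (abs_nonneg _),
          Real.rpow_two, sq_abs]

/-! ### The bounded extension of `R(γ, ·)` -/

lemma abs_le_toReal_mul_of_enorm_le {x y : ℝ} {C : ℝ≥0∞} (hC : C ≠ ⊤) (hy : 0 ≤ y)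
    (h : ‖x‖ₑ ≤ C * ENNReal.ofReal y) : |x| ≤ C.toReal * y := by
  simpa [hy] using ENNReal.toReal_mono (ENNReal.mul_ne_top hC ENNReal.ofReal_ne_top) h

theorem statement13_general {α σ : ℝ} (hα : α ∈ Ico (1 : ℝ) 3) (hασ : 2 < α + 2 * σ)
    {γ : ℝ → Rn n} (hγ : MemHF ((α + 1) / 2 + σ) γ) (hinj : PerInjective γ)
    (harc : ArcLengthParam γ) {s : ℝ} (hs : s ∈ Ioo 0 σ) :
    ∃ C : ℝ, ∀ h : ℝ → Rn n, ContDiff ℝ 1 h → MemHF (3 / 2 - s) h →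
      IntegrableOn (fun p : ℝ × ℝ => Rintegrand α γ h p.1 p.2)
        (Ioc 0 1 ×ˢ Icc (-(1 : ℝ) / 2) (1 / 2)) ∧
      |Rval α γ h| ≤ C * √(fNormSq (3 / 2 - s) h) := by
  obtain ⟨ε, hε, hε'⟩ : ∃ ε > 0, ε < min (σ - s) ((3 - α) / 2) :=
    exists_between (lt_min (by linarith [hs.2]) (by linarith [hα.2]))
  obtain ⟨hεs, hεα⟩ := lt_min_iff.1 hε'
  have hγC1 : PeriodicC1 γ := ⟨hγ.1, hγ.contDiff (by linarith)⟩
  have hmajorant : weightedL2Norm ((α - 1) / 2 + σ) (derivMajorant γ) ≠ ⊤ :=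
    hγ.weightedL2Norm_derivMajorant_ne_top (by ring)
  have hκ : max 0 (s - 1 / 2) + 1 / 2 < (α - 1) / 2 + σ := by
    rw [← lt_sub_iff_add_lt]
    exact max_lt (by linarith) (by linarith [hs.2, hα.1])
  obtain ⟨C, hC, hbound⟩ := exists_enorm_Rval_le (α := α) (b := σ - ε) (q := 1 / 2 - s)
    (τ := (α - 1) / 2 + ε) hγC1 harc hinj (le_max_left 0 (s - 1 / 2))
    (max_le (by linarith [hs.1]) (by linarith)) (by linarith [le_max_right 0 (s - 1 / 2)])
    (by linarith) (by linarith [hα.1]) (by linarith) (by linarith)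
    (tsum_freqWeight_mul_ne_top hκ hmajorant) (by ring_nf at hmajorant ⊢; exact hmajorant)
    hγC1.fourierDominated_velocity
  refine ⟨C.toReal * (2 * Real.pi * √(2 ^ |1 / 2 - s|)), fun h hhC1 hh => ?_⟩
  have hhP : PeriodicC1 h := ⟨hh.1, hhC1⟩
  obtain ⟨hint, hR⟩ := hbound h hhP _ hhP.fourierDominated_velocity
  rw [show 3 / 2 - s = 1 / 2 - s + 1 by ring] at hh ⊢
  rw [mul_assoc]
  exact ⟨hint, abs_le_toReal_mul_of_enorm_le hC (by positivity)
    (hR.trans (by gcongr; exact hh.weightedL2Norm_derivMajorant_le))⟩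

/-- For an injective arc-length curve `γ ∈ H^{(α+1)/2+σ,2}` with `σ > 0` and
every `0 < σ̂ < σ`, `h ↦ R(γ,h)` is bounded by a constant times the `H^{3/2−σ̂,2}`-norm of `h`
for all `h ∈ H^{(α+1)/2,2}`. -/
theorem statement13 {n : ℕ} (hn : 2 ≤ n) {α σ : ℝ} (hα : α ∈ Ioo (2:ℝ) 3) (hσ : 0 < σ)
    {γ : ℝ → Rn n} (hγ : MemHF ((α + 1) / 2 + σ) γ) (hinj : PerInjective γ)
    (harc : ArcLengthParam γ) :
    ∀ σh ∈ Ioo (0:ℝ) σ, ∃ C : ℝ,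
      ∀ h : ℝ → Rn n, MemH1 ((α - 1) / 2) h →
        |Rval α γ h| ≤ C * Real.sqrt (fNormSq (3/2 - σh) h) := by
  intro s hs
  obtain ⟨C, hC⟩ := statement13_general ⟨by linarith [hα.1], hα.2⟩ (by linarith [hα.1]) hγ hinj
    harc hs
  exact ⟨C, fun h hh => (hC h hh.2.1
    ((hh.memHF (by linarith [hα.1])).mono (by linarith [hα.1, hs.1]))).2⟩

end
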